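/- For each m ∈ ℕ, the Komornik–Loreti constant β_m belongs to E_∞ with coding (s_1, 01, 01, …), where s_1 = (k−1)k if m = 2k−1 and s_1 = k if m = 2k, and its critical value is τ(β_m) = m/(β_m − 1) − 1 = (m + 1 − β_m)/(β_m − 1). -/

import Mathlib

open Set Filter MeasureTheory Topology

noncomputable section

/-- The β-transformation `x ↦ βx - ⌊βx⌋`. -/
def Tbeta (β x : ℝ) : ℝ := Int.fract (β * x)

/-- The survivor set `K_β(t)`: points of `[0,1)` whose orbit never enters `[0,t)`. -/
def survivor (β t : ℝ) : Set ℝ :=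
  {x | x ∈ Set.Ico (0 : ℝ) 1 ∧ ∀ n : ℕ, t ≤ (Tbeta β)^[n] x}

/-- The set-valued bifurcation set `E_β`. -/
def Ebif (β : ℝ) : Set ℝ :=
  {t | t ∈ Set.Ico (0 : ℝ) 1 ∧ ∀ t' : ℝ, t < t' → survivor β t' ≠ survivor β t}

/-- `(c)_β = Σ_{i≥1} c_i β^{-i}` for an infinite digit sequence (indexed from `0`). -/
def valSeq (β : ℝ) (c : ℕ → ℕ) : ℝ := ∑' i : ℕ, (c i : ℝ) / β ^ (i + 1)

/-- `(w 0^∞)_β` for a finite word `w`. -/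
def valWord (β : ℝ) (w : List ℕ) : ℝ :=
  ∑ i ∈ Finset.range w.length, (w.getD i 0 : ℝ) / β ^ (i + 1)

/-- `w⁺`: increment the last letter of `w`. -/
def wplus (w : List ℕ) : List ℕ := w.dropLast ++ [w.getLast! + 1]

/-- `w⁻`: decrement the last letter of `w`. -/
def wminus (w : List ℕ) : List ℕ := w.dropLast ++ [w.getLast! - 1]

/-- `θ`: increment every digit of `w` by one. -/
def theta (w : List ℕ) : List ℕ := w.map (· + 1)

/-- `L(w)`: the lexicographically largest cyclic permutation of `w`. -/
def maxCyc (w : List ℕ) : List ℕ := ((List.range w.length).map w.rotate).foldl max []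

/-- `w^∞`: the periodic sequence with period block `w`. -/
def perSeq (w : List ℕ) : ℕ → ℕ := fun i => w.getD (i % w.length) 0

/-- The sequence given by the word `w` followed by the sequence `c`. -/
def wordSeq (w : List ℕ) (c : ℕ → ℕ) : ℕ → ℕ :=
  fun i => if i < w.length then w.getD i 0 else c (i - w.length)

/-- Strict lexicographic order `≺` on sequences. -/
def seqLt (x y : ℕ → ℕ) : Prop := ∃ n, (∀ i < n, x i = y i) ∧ x n < y n

/-- Lexicographic order `≼` on sequences. -/
def seqLe (x y : ℕ → ℕ) : Prop := x = y ∨ seqLt x y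

/-- The `n`-fold left shift `σⁿ` on sequences. -/
def shiftn (n : ℕ) (x : ℕ → ℕ) : ℕ → ℕ := fun i => x (i + n)

/-- One step of the Farey recursion: insert the concatenation `w_i w_{i+1}`
between consecutive entries. -/
def fareyInsert : List (List ℕ) → List (List ℕ)
  | [] => []
  | [w] => [w]
  | w :: v :: rest => w :: (w ++ v) :: fareyInsert (v :: rest)

/-- The ordered set `F_n` of Farey words of level `n`. -/
def fareyLevel : ℕ → List (List ℕ)
  | 0 => [[0], [1]]
  | n + 1 => fareyInsert (fareyLevel n)

/-- `F`: all Farey words of length at least two. -/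
def FareySet : Set (List ℕ) := {w | (∃ n, w ∈ fareyLevel n) ∧ w ≠ [0] ∧ w ≠ [1]}

/-- `F̂ = F ∪ {1}`. -/
def FareyHat : Set (List ℕ) := FareySet ∪ {[1]}

/-- The extended Farey set `F_e = {θ^k(w) : w ∈ F̂, k ≥ 0}`. -/
def FareyExt : Set (List ℕ) := {w | ∃ v ∈ FareyHat, ∃ k : ℕ, w = theta^[k] v}

/-- A nonempty word is Lyndon iff it is strictly smaller than each of its nontrivial
cyclic rotations (equivalently: aperiodic and lexicographically smallest among its
cyclic permutations). -/
def IsLyndon (w : List ℕ) : Prop := w ≠ [] ∧ ∀ i, 0 < i → i < w.length → w < w.rotate i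

/-- `L_e`: all Lyndon words over `ℕ ∪ {0}` except the single-letter word `0`. -/
def LyndonExt : Set (List ℕ) := {w | IsLyndon w ∧ w ≠ [0]}

/-- `L`: Lyndon words over `{0,1}` of length at least `2`. -/
def LyndonBin : Set (List ℕ) := {w | IsLyndon w ∧ 2 ≤ w.length ∧ ∀ d ∈ w, d ≤ 1}

/-- The block of `Φ_s` emitted for current digit `d` after previous digit `p`:
`L(s)` for `00`, `s⁻` for `10`, `L(s)⁺` for `01`, `s` for `11`. -/
def phiBlock (s : List ℕ) (p d : ℕ) : List ℕ :=
  if d = 0 then (if p = 0 then maxCyc s else wminus s)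
  else (if p = 0 then wplus (maxCyc s) else s)

def phiAux (s : List ℕ) : ℕ → List ℕ → List ℕ
  | _, [] => []
  | p, d :: rest => phiBlock s p d ++ phiAux s d rest

/-- The substitution `Φ_s` on finite words; `s • r = subst s r`.  An initial digit `0`
produces `s⁻`, an initial digit `1` produces `L(s)⁺`, and thereafter runs
`0^k` resp. `1^l` produce `L(s)^{k-1}` resp. `s^{l-1}`, in accordance with
`Φ_s(0^{k₁}1^{l₁}…) = s⁻ L(s)^{k₁-1} L(s)⁺ s^{l₁-1} …` and
`Φ_s(1^{k₁}0^{l₁}…) = L(s)⁺ s^{k₁-1} s⁻ L(s)^{l₁-1} …`. -/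
def subst (s r : List ℕ) : List ℕ :=
  match r with
  | [] => []
  | d :: rest => phiBlock s (1 - d) d ++ phiAux s d rest

/-- The substitution `Φ_s` on infinite sequences, as the limit of its values
on initial segments (each digit contributes a nonempty block, so the `i`-th letter
is determined by the first `i+1` digits). -/
def phiSeq (s : List ℕ) (c : ℕ → ℕ) : ℕ → ℕ :=
  fun i => (subst s (List.ofFn fun j : Fin (i + 1) => c j)).getD i 0

/-- `Λ_e(m) = {s₁ • s₂ • … • s_m : s₁ ∈ F_e, s₂,…,s_m ∈ F}`. -/
def LambdaE (m : ℕ) : Set (List ℕ) :=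
  {w | ∃ s₁ ∈ FareyExt, ∃ rs : List (List ℕ),
    rs.length = m - 1 ∧ (∀ r ∈ rs, r ∈ FareySet) ∧ w = rs.foldl subst s₁}

/-- `Λ_e = ∪_{m≥1} Λ_e(m)`. -/
def LambdaExt : Set (List ℕ) := ⋃ m ∈ Set.Ici 1, LambdaE m

/-- `β_ℓ^S`: the base `β > 1` with `(L(S)^∞)_β = 1` (it is unique since
`β ↦ (c)_β` is strictly decreasing). -/
def betaL (S : List ℕ) : ℝ :=
  Classical.epsilon fun β : ℝ => 1 < β ∧ valSeq β (perSeq (maxCyc S)) = 1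

/-- `β_*^S`: the base `β > 1` with `(L(S)⁺ S⁻ L(S)^∞)_β = 1`. -/
def betaStar (S : List ℕ) : ℝ :=
  Classical.epsilon fun β : ℝ =>
    1 < β ∧ valSeq β (wordSeq (wplus (maxCyc S) ++ wminus S) (perSeq (maxCyc S))) = 1

/-- `β_r^S`: the base `β > 1` with `(L(S)⁺ S^∞)_β = 1`. -/
def betaR (S : List ℕ) : ℝ :=
  Classical.epsilon fun β : ℝ => 1 < β ∧ valSeq β (wordSeq (wplus (maxCyc S)) (perSeq S)) = 1

/-- The Lyndon/Farey interval `J^S = [β_ℓ^S, β_r^S]`. -/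
def Jint (S : List ℕ) : Set ℝ := Set.Icc (betaL S) (betaR S)

/-- The basic interval `I^S = [β_ℓ^S, β_*^S]`. -/
def Iint (S : List ℕ) : Set ℝ := Set.Icc (betaL S) (betaStar S)

/-- The exceptional set `E = (1,∞) ∖ ∪_{s ∈ F_e} J^s`. -/
def Eexc : Set ℝ := Set.Ioi 1 \ ⋃ s ∈ FareyExt, Jint s

/-- The relative exceptional set `E^S = (J^S ∖ I^S) ∖ ∪_{r ∈ F} J^{S•r}`. -/
def EexcRel (S : List ℕ) : Set ℝ :=
  (Jint S \ Iint S) \ ⋃ r ∈ FareySet, Jint (subst S r)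

/-- The infinitely renormalizable set `E_∞ = ∩_{m≥1} ∪_{S ∈ Λ_e(m)} J^S`. -/
def Einf : Set ℝ := ⋂ m ∈ Set.Ici 1, ⋃ S ∈ LambdaE m, Jint S

/-- `E_L = E ∪ {β_ℓ^s : s ∈ F_e}`. -/
def EL : Set ℝ := Eexc ∪ {x | ∃ s ∈ FareyExt, x = betaL s}

/-- The critical value `τ(β) = min{t > 0 : dim_H K_β(t) = 0}`. -/
def tau (β : ℝ) : ℝ := sInf {t : ℝ | 0 < t ∧ dimH (survivor β t) = 0}

end

/-- The Komornik–Loreti constant for the alphabet `{0,1,…,m}`: the smallest base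
`β > 1` in which `1` has a unique expansion `1 = Σ_{i≥1} c_i β^{-i}` with digits
`c_i ∈ {0,…,m}`. -/
noncomputable def klConst (m : ℕ) : ℝ :=
  sInf {β : ℝ | 1 < β ∧ ∃! c : ℕ → ℕ, (∀ i, c i ≤ m) ∧ valSeq β c = 1}

/-!
The unique expansion of `1` in base `β_m` is the shifted Thue–Morse sequence `λ` over
`{0, …, m}`: its block `λ_{2^n} ⋯ λ_{2^(n+1)-1}` is the reflection of `λ_0 ⋯ λ_{2^n-1}` with the
last digit raised by one, it is the least sequence exceeding all its proper tails and the
reflections of all its tails, and the value of its reflection is `m / (β_m - 1) - 1`. The words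
`λ_{2^n} ⋯ λ_{2^(n+1)-1}` are those of the coding `s₁ • 01 • ⋯ • 01`, and comparing `λ` with the
two sequences defining `J^S` puts `β_m` in each of these intervals.

`K_β(t)` consists of the values of the digit sequences all of whose tails have value in `[t, 1)`.
For `t` above the critical value, the windows of such a sequence are squeezed between those of `λ`
and of its reflection up to a fixed finite level, which leaves only eventually periodic sequences,
so `K_β(t)` is countable. For `t` below it, the words `(λ_0 ⋯ λ_{N-1})⁻(λ_0 ⋯ λ_{N-1})⁻` and
`(λ_0 ⋯ λ_{2N-1})⁻` with `N = 2^n` large can be concatenated freely, which gives a separated binary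
coding and hence positive dimension.
-/

namespace KomornikLoreti

/-! ### Words and the lexicographic order -/

section Words

variable {n k m : ℕ} {x y : ℕ → ℕ} {u v w : List ℕ}

/-- The prefix `x₀ … x_{n-1}` of a sequence, as a word; prefixes of equal length are compared by
the lexicographic order of `List ℕ`. -/
def word (n : ℕ) (x : ℕ → ℕ) : List ℕ := (List.range n).map x

/-- The digitwise reflection `d ↦ m - d` in the alphabet `{0, …, m}`. -/
def reflect (m : ℕ) (x : ℕ → ℕ) : ℕ → ℕ := fun i => m - x i

lemma reflect_le (m : ℕ) (x : ℕ → ℕ) (i : ℕ) : reflect m x i ≤ m := Nat.sub_le _ _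

lemma reflect_reflect (hx : ∀ i, x i ≤ m) : reflect m (reflect m x) = x :=
  funext fun i => Nat.sub_sub_self (hx i)

lemma shiftn_shiftn (i j : ℕ) (x : ℕ → ℕ) : shiftn i (shiftn j x) = shiftn (i + j) x :=
  funext fun k => congrArg x (add_assoc k i j)

@[simp]
lemma length_word (n : ℕ) (x : ℕ → ℕ) : (word n x).length = n := by simp [word]

@[simp]
lemma getElem_word (n : ℕ) (x : ℕ → ℕ) {i : ℕ} (hi : i < (word n x).length) :
    (word n x)[i] = x i := by
  simp [word]

lemma getD_word (x : ℕ → ℕ) {i : ℕ} (hi : i < n) : (word n x).getD i 0 = x i := by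
  rw [List.getD_eq_getElem _ _ (by simpa using hi), getElem_word]

lemma word_eq_word_iff : word n x = word n y ↔ ∀ i < n, x i = y i := by
  simp [word]

lemma word_add (n k : ℕ) (x : ℕ → ℕ) : word (n + k) x = word n x ++ word k (shiftn n x) := by
  simp [word, List.range_add, shiftn, Function.comp_def, add_comm]

lemma word_succ (n : ℕ) (x : ℕ → ℕ) : word (n + 1) x = word n x ++ [x n] := by
  simp [word, List.range_succ]

lemma word_add_eq_append (h : word (n + k) x = u ++ v) (hu : u.length = n) :
    word n x = u ∧ word k (shiftn n x) = v :=
  List.append_inj (by rw [← word_add, h]) (by rw [length_word, hu])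

lemma le_of_mem_word (hx : ∀ i, x i ≤ m) {d : ℕ} (hd : d ∈ word n x) : d ≤ m := by
  obtain ⟨i, -, rfl⟩ := List.mem_map.1 hd
  exact hx i

lemma append_lt_append_iff {u v u' v' : List ℕ} (h : u.length = v.length) :
    u ++ u' < v ++ v' ↔ u < v ∨ u = v ∧ u' < v' := by
  induction u generalizing v with
  | nil => simp [List.eq_nil_of_length_eq_zero h.symm]
  | cons a u ih =>
    obtain ⟨b, v, rfl⟩ := List.exists_cons_of_length_eq_add_one h.symm
    simp only [List.cons_append, List.cons_lt_cons_iff, ih (Nat.succ.inj h), List.cons.injEq]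
    tauto

lemma append_le_append_iff {u v u' v' : List ℕ} (h : u.length = v.length) :
    u ++ u' ≤ v ++ v' ↔ u < v ∨ u = v ∧ u' ≤ v' := by
  have hne : u = v ↔ v = u := eq_comm
  rw [← not_lt, append_lt_append_iff h.symm, ← not_lt]
  rcases lt_trichotomy u v with h | rfl | h
  · simp [h, h.not_gt, h.ne']
  · simp
  · simp [h, h.not_gt, h.ne']

lemma word_lt_word_iff :
    word n x < word n y ↔ ∃ j < n, (∀ i < j, x i = y i) ∧ x j < y j := by
  simp only [List.lt_iff_exists, length_word, lt_irrefl, and_false, false_or, getElem_word]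
  exact ⟨fun ⟨j, hj, _, h⟩ => ⟨j, hj, h⟩, fun ⟨j, hj, h⟩ => ⟨j, hj, hj, h⟩⟩

lemma word_add_lt_word_add_iff :
    word (n + k) x < word (n + k) y ↔
      word n x < word n y ∨ word n x = word n y ∧ word k (shiftn n x) < word k (shiftn n y) := by
  rw [word_add, word_add, append_lt_append_iff (by simp)]

lemma word_add_le_word_add_iff :
    word (n + k) x ≤ word (n + k) y ↔
      word n x < word n y ∨ word n x = word n y ∧ word k (shiftn n x) ≤ word k (shiftn n y) := by
  rw [word_add, word_add, append_le_append_iff (by simp)]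

lemma word_lt_word_mono (hnk : n ≤ k) (h : word n x < word n y) : word k x < word k y := by
  obtain ⟨k, rfl⟩ := Nat.exists_eq_add_of_le hnk
  exact word_add_lt_word_add_iff.2 (Or.inl h)

lemma word_le_word_anti (hnk : n ≤ k) (h : word k x ≤ word k y) : word n x ≤ word n y :=
  not_lt.1 fun hlt => (word_lt_word_mono hnk hlt).not_ge h

lemma word_reflect_lt_word_reflect (hy : ∀ i, y i ≤ m) (h : word n x < word n y) :
    word n (reflect m y) < word n (reflect m x) := by
  obtain ⟨j, hj, heq, hlt⟩ := word_lt_word_iff.1 h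
  refine word_lt_word_iff.2 ⟨j, hj, fun i hi => by simp [reflect, heq i hi], ?_⟩
  exact Nat.sub_lt_sub_left (hlt.trans_le (hy j)) hlt

lemma word_reflect_eq_word_reflect (h : word n x = word n y) :
    word n (reflect m x) = word n (reflect m y) :=
  word_eq_word_iff.2 fun i hi => by simp [reflect, word_eq_word_iff.1 h i hi]

lemma word_reflect_le_word_reflect (hy : ∀ i, y i ≤ m) (h : word n x ≤ word n y) :
    word n (reflect m y) ≤ word n (reflect m x) := by
  rcases h.lt_or_eq with h | h
  · exact (word_reflect_lt_word_reflect hy h).le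
  · exact (word_reflect_eq_word_reflect h).ge

lemma seqLt_iff_exists_word_lt : seqLt x y ↔ ∃ n, word n x < word n y := by
  simp only [seqLt, word_lt_word_iff]
  exact ⟨fun ⟨n, h⟩ => ⟨n + 1, n, n.lt_succ_self, h⟩, fun ⟨_, j, _, h⟩ => ⟨j, h⟩⟩

lemma not_seqLt_iff_seqLe : ¬ seqLt x y ↔ seqLe y x := by
  have h : ¬ seqLt x y ↔ toLex y ≤ toLex x := not_lt (a := toLex x) (b := toLex y)
  rw [h, le_iff_eq_or_lt]
  rfl

lemma seqLe_iff_forall_word_le : seqLe x y ↔ ∀ n, word n x ≤ word n y := by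
  simp [← not_seqLt_iff_seqLe, seqLt_iff_exists_word_lt]

lemma wplus_append_singleton (w : List ℕ) (a : ℕ) : wplus (w ++ [a]) = w ++ [a + 1] := by
  simp [wplus]

lemma wminus_append_singleton (w : List ℕ) (a : ℕ) : wminus (w ++ [a]) = w ++ [a - 1] := by
  simp [wminus]

lemma wminus_append (u : List ℕ) (hv : v ≠ []) : wminus (u ++ v) = u ++ wminus v := by
  rw [← List.dropLast_append_getLast hv, ← List.append_assoc, wminus_append_singleton,
    wminus_append_singleton, List.append_assoc]

lemma wminus_wplus (hw : w ≠ []) : wminus (wplus w) = w := by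
  rw [← List.dropLast_append_getLast hw, wplus_append_singleton, wminus_append_singleton,
    Nat.add_sub_cancel]

lemma length_wminus (hw : w ≠ []) : (wminus w).length = w.length := by
  have := List.length_pos_iff.2 hw
  simp [wminus]
  omega

lemma le_of_mem_wminus (hw : ∀ d ∈ w, d ≤ m) {d : ℕ} (hd : d ∈ wminus w) : d ≤ m := by
  rcases w.eq_nil_or_concat with rfl | ⟨u, a, rfl⟩
  · simp_all [wminus]
  · rw [List.concat_eq_append, wminus_append_singleton, List.mem_append, List.mem_singleton] at hd
    rcases hd with hd | rfl
    · exact hw d (by simp [hd])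
    · exact (Nat.sub_le a 1).trans (hw a (by simp))

lemma wplus_le_iff (hw : w ≠ []) (h : w.length = v.length) : wplus w ≤ v ↔ w < v := by
  have hv : v ≠ [] := List.length_pos_iff.1 (h ▸ List.length_pos_iff.2 hw)
  have hlen : w.dropLast.length = v.dropLast.length := by simp [h]
  have hsingleton (a b : ℕ) : [a + 1] ≤ [b] ↔ [a] < [b] := by
    rw [← not_lt]
    simp [List.cons_lt_cons_iff]
  rw [← List.dropLast_append_getLast hw, ← List.dropLast_append_getLast hv,
    wplus_append_singleton, append_le_append_iff hlen, append_lt_append_iff hlen, hsingleton]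

lemma lt_wplus_iff (hw : w ≠ []) (h : w.length = v.length) : v < wplus w ↔ v ≤ w := by
  rw [← not_le, wplus_le_iff hw h, not_lt]

lemma word_ne_nil [NeZero n] : word n x ≠ [] := by
  simp [word, NeZero.ne n]

end Words

/-! ### Values of digit sequences -/

section Values

variable {β : ℝ} {m n : ℕ} {x y : ℕ → ℕ}

lemma hasSum_const_div_pow (hβ : 1 < β) (a : ℝ) :
    HasSum (fun i : ℕ => a / β ^ (i + 1)) (a / (β - 1)) := by
  have h0 : (0 : ℝ) < β := by linarith
  have hsum := (hasSum_geometric_of_lt_one (inv_nonneg.2 h0.le)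
    (inv_lt_one_of_one_lt₀ hβ)).mul_left (a / β)
  rw [show a / β * (1 - β⁻¹)⁻¹ = a / (β - 1) by
    rw [div_mul_eq_mul_div, ← div_eq_mul_inv, div_div, sub_mul, inv_mul_cancel₀ h0.ne', one_mul]]
    at hsum
  refine hsum.congr_fun fun i => ?_
  rw [inv_pow, pow_succ', ← div_eq_mul_inv, div_div]

lemma summable_valSeq (hβ : 1 < β) (hx : ∀ i, x i ≤ m) :
    Summable fun i : ℕ => (x i : ℝ) / β ^ (i + 1) := by
  refine (hasSum_const_div_pow hβ m).summable.of_nonneg_of_le (fun i => by positivity) fun i => ?_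
  gcongr
  exact_mod_cast hx i

lemma valSeq_nonneg (hβ : 1 < β) (x : ℕ → ℕ) : 0 ≤ valSeq β x :=
  tsum_nonneg fun i => by positivity

lemma valSeq_pos (hβ : 1 < β) (hx : ∀ i, x i ≤ m) {i : ℕ} (hi : 0 < x i) : 0 < valSeq β x :=
  (summable_valSeq hβ hx).tsum_pos (fun i => by positivity) i (by positivity)

lemma valSeq_le (hβ : 1 < β) (hx : ∀ i, x i ≤ m) : valSeq β x ≤ m / (β - 1) := by
  rw [← (hasSum_const_div_pow hβ m).tsum_eq]
  refine (summable_valSeq hβ hx).tsum_le_tsum (fun i => ?_) (hasSum_const_div_pow hβ m).summable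
  gcongr
  exact_mod_cast hx i

lemma valSeq_reflect (hβ : 1 < β) (hx : ∀ i, x i ≤ m) :
    valSeq β (reflect m x) = m / (β - 1) - valSeq β x := by
  rw [eq_sub_iff_add_eq, ← (hasSum_const_div_pow hβ m).tsum_eq, valSeq, valSeq,
    ← (summable_valSeq hβ (reflect_le m x)).tsum_add (summable_valSeq hβ hx)]
  refine tsum_congr fun i => ?_
  simp only [reflect, Nat.cast_sub (hx i)]
  ring

lemma valSeq_reflect_shiftn (hβ : 1 < β) (hx : ∀ i, x i ≤ m) (i : ℕ) :
    valSeq β (reflect m (shiftn i x)) = m / (β - 1) - valSeq β (shiftn i x) :=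
  valSeq_reflect hβ fun j => hx (j + i)

lemma valSeq_strictAnti {γ : ℝ} (hβ : 1 < β) (hβγ : β < γ) (hx : ∀ i, x i ≤ m) {i : ℕ}
    (hi : 0 < x i) : valSeq γ x < valSeq β x := by
  refine (summable_valSeq (hβ.trans hβγ) hx).tsum_lt_tsum (i := i) (fun j => ?_) ?_
    (summable_valSeq hβ hx)
  · dsimp only
    gcongr
  · gcongr

lemma continuousOn_valSeq {a : ℝ} (ha : 1 < a) (hx : ∀ i, x i ≤ m) :
    ContinuousOn (fun β => valSeq β x) (Ici a) := by
  have hpos : ∀ β ∈ Ici a, 0 < β := fun β hβ => (zero_lt_one.trans ha).trans_le hβ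
  refine continuousOn_tsum (fun i => ?_) (summable_valSeq ha hx) fun i β hβ => ?_
  · exact continuousOn_const.div (continuousOn_id.pow _) fun β hβ => (pow_pos (hpos β hβ) _).ne'
  · have := hpos β hβ
    rw [Real.norm_of_nonneg (by positivity)]
    gcongr
    exact hβ

lemma valSeq_eq_valWord_add (hβ : 1 < β) (hx : ∀ i, x i ≤ m) (n : ℕ) :
    valSeq β x = valWord β (word n x) + valSeq β (shiftn n x) / β ^ n := by
  rw [valSeq, ← (summable_valSeq hβ hx).sum_add_tsum_nat_add n, valWord, length_word, valSeq,
    ← tsum_div_const]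
  congr 1
  · exact Finset.sum_congr rfl fun i hi => by rw [getD_word _ (Finset.mem_range.1 hi)]
  · refine tsum_congr fun i => ?_
    rw [shiftn, div_div, ← pow_add, Nat.add_right_comm]

lemma valSeq_eq_head_add (hβ : 1 < β) (hx : ∀ i, x i ≤ m) :
    valSeq β x = (x 0 + valSeq β (shiftn 1 x)) / β := by
  rw [valSeq_eq_valWord_add hβ hx 1]
  simp [valWord, word, add_div]

lemma valSeq_shiftn_succ (hβ : 1 < β) (hx : ∀ i, x i ≤ m) (i : ℕ) :
    valSeq β (shiftn (i + 1) x) = β * valSeq β (shiftn i x) - x i := by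
  rw [valSeq_eq_head_add (x := shiftn i x) hβ fun j => hx _, shiftn_shiftn, add_comm 1 i,
    mul_div_cancel₀ _ (by positivity), shiftn, zero_add, add_sub_cancel_left]

lemma valSeq_sub_of_word_eq (hβ : 1 < β) (hx : ∀ i, x i ≤ m) (hy : ∀ i, y i ≤ m)
    (h : word n x = word n y) :
    valSeq β x - valSeq β y = (valSeq β (shiftn n x) - valSeq β (shiftn n y)) / β ^ n := by
  rw [valSeq_eq_valWord_add hβ hx n, valSeq_eq_valWord_add hβ hy n, h]
  ring

lemma valSeq_sub_of_agree (hβ : 1 < β) (hx : ∀ i, x i ≤ m) (hy : ∀ i, y i ≤ m)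
    (h : ∀ i < n, x i = y i) :
    valSeq β x - valSeq β y =
      (x n - y n + valSeq β (shiftn (n + 1) x) - valSeq β (shiftn (n + 1) y)) / β ^ (n + 1) := by
  rw [valSeq_sub_of_word_eq hβ hx hy (word_eq_word_iff.2 h),
    valSeq_eq_head_add (x := shiftn n x) hβ fun i => hx _,
    valSeq_eq_head_add (x := shiftn n y) hβ fun i => hy _, shiftn_shiftn, shiftn_shiftn,
    add_comm 1 n, shiftn, shiftn, zero_add, ← sub_div, div_div, ← pow_succ']
  ring

lemma valSeq_add_le_of_word_lt (hβ : 1 < β) (hx : ∀ i, x i ≤ m) (hy : ∀ i, y i ≤ m)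
    (hxt : ∀ p, 0 < p → valSeq β (shiftn p x) ≤ 1) {t : ℝ} (ht : 0 ≤ t)
    (hyt : ∀ p, t ≤ valSeq β (shiftn p y)) (h : word n x < word n y) :
    valSeq β x + t / β ^ n ≤ valSeq β y := by
  obtain ⟨j, hj, heq, hlt⟩ := word_lt_word_iff.1 h
  have hdigit : (x j : ℝ) + 1 ≤ y j := by exact_mod_cast hlt
  suffices valSeq β x - valSeq β y ≤ -(t / β ^ n) by linarith
  calc valSeq β x - valSeq β y ≤ -t / β ^ (j + 1) := by
        rw [valSeq_sub_of_agree hβ hx hy heq]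
        gcongr
        linarith [hxt (j + 1) j.succ_pos, hyt (j + 1)]
    _ ≤ -(t / β ^ n) := by
        rw [neg_div, neg_le_neg_iff]
        gcongr
        exacts [hβ.le, hj]

lemma valSeq_le_of_word_lt (hβ : 1 < β) (hx : ∀ i, x i ≤ m) (hy : ∀ i, y i ≤ m)
    (hxt : ∀ p, 0 < p → valSeq β (shiftn p x) ≤ 1) (h : word n x < word n y) :
    valSeq β x ≤ valSeq β y := by
  simpa using valSeq_add_le_of_word_lt hβ hx hy hxt le_rfl (fun p => valSeq_nonneg hβ _) h

lemma valSeq_le_add_of_word_le (hβ : 1 < β) (hx : ∀ i, x i ≤ m) (hy : ∀ i, y i ≤ m)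
    (hxt : ∀ p, valSeq β (shiftn p x) ≤ 1) (h : word n x ≤ word n y) :
    valSeq β x ≤ valSeq β y + 1 / β ^ n := by
  rcases h.lt_or_eq with h | h
  · have := valSeq_le_of_word_lt hβ hx hy (fun p _ => hxt p) h
    have : 0 ≤ 1 / β ^ n := by positivity
    linarith
  · have hle : (valSeq β (shiftn n x) - valSeq β (shiftn n y)) / β ^ n ≤ 1 / β ^ n := by
      gcongr
      linarith [hxt n, valSeq_nonneg hβ (shiftn n y)]
    linarith [valSeq_sub_of_word_eq hβ hx hy h]

lemma seqLt_of_valSeq_lt (hβ : 1 < β) (hx : ∀ i, x i ≤ m) (hy : ∀ i, y i ≤ m)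
    (hyt : ∀ p, 0 < p → valSeq β (shiftn p y) ≤ 1) (h : valSeq β x < valSeq β y) :
    seqLt x y := by
  by_contra hnot
  rcases not_seqLt_iff_seqLe.1 hnot with rfl | hlt
  · exact h.false
  · obtain ⟨n, hn⟩ := seqLt_iff_exists_word_lt.1 hlt
    exact (valSeq_le_of_word_lt hβ hy hx hyt hn).not_gt h

lemma nonpos_of_expanding (hβ : 1 < β) {d : ℕ → ℝ} {C : ℝ} (hC : ∀ i, d i ≤ C)
    (h : ∀ i, d i ≤ 0 ∨ ∃ p, 1 ≤ p ∧ d i ≤ d (i + p) / β ^ p) (i : ℕ) : d i ≤ 0 := by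
  have hle : ∀ n i, d i ≤ max C 0 / β ^ n := by
    intro n
    induction n with
    | zero => intro i; simpa using Or.inl (hC i)
    | succ n ih =>
      intro i
      rcases h i with h | ⟨p, hp, h⟩
      · exact h.trans (by positivity)
      · calc d i ≤ d (i + p) / β ^ p := h
          _ ≤ max C 0 / β ^ n / β := by
              gcongr
              exacts [ih (i + p), le_self_pow₀ hβ.le (by omega)]
          _ = max C 0 / β ^ (n + 1) := by rw [pow_succ, div_div]
  exact ge_of_tendsto' (Tendsto.const_div_atTop (tendsto_pow_atTop_atTop_of_one_lt hβ) _)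
    fun n => hle n i

lemma valSeq_shiftn_le_one (hβ : 1 < β) (hx : ∀ i, x i ≤ m) (hy : ∀ i, y i ≤ m)
    (hone : valSeq β y = 1) (h : ∀ i, seqLe (shiftn i x) y) (i : ℕ) :
    valSeq β (shiftn i x) ≤ 1 := by
  have hbound : ∀ i, valSeq β (shiftn i x) - 1 ≤ m / (β - 1) := fun i => by
    linarith [valSeq_le hβ (x := shiftn i x) fun j => hx _]
  refine sub_nonpos.1 (nonpos_of_expanding hβ (d := fun i => valSeq β (shiftn i x) - 1)
    hbound (fun i => ?_) i)
  rcases h i with heq | ⟨j, heq, hlt⟩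
  · exact Or.inl (by rw [heq, hone, sub_self])
  · refine Or.inr ⟨j + 1, by omega, ?_⟩
    have hdigit : (shiftn i x j : ℝ) + 1 ≤ y j := by exact_mod_cast hlt
    have hsub := valSeq_sub_of_agree hβ (x := shiftn i x) (fun k => hx _) hy heq
    rw [hone, shiftn_shiftn, add_comm (j + 1)] at hsub
    rw [hsub]
    refine div_le_div_of_nonneg_right ?_ (by positivity)
    linarith [valSeq_nonneg hβ (shiftn (j + 1) y)]

lemma valSeq_shiftn_eq_of_orbit (hβ : 1 < β) (hx : ∀ i, x i ≤ m) {z : ℕ → ℝ} {C : ℝ}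
    (hzC : ∀ i, |z i| ≤ C) (hz : ∀ i, z (i + 1) = β * z i - x i) (i : ℕ) :
    valSeq β (shiftn i x) = z i := by
  have hrec : ∀ i, valSeq β (shiftn i x) - z i =
      (valSeq β (shiftn (i + 1) x) - z (i + 1)) / β := by
    intro i
    rw [valSeq_shiftn_succ hβ hx, hz]
    field_simp
    ring
  refine sub_eq_zero.1 (abs_nonpos_iff.1 (nonpos_of_expanding hβ (C := m / (β - 1) + C)
    (d := fun i => |valSeq β (shiftn i x) - z i|) (fun i => ?_) (fun i => ?_) i))
  · refine (abs_sub _ _).trans (add_le_add ?_ (hzC i))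
    rw [abs_of_nonneg (valSeq_nonneg hβ _)]
    exact valSeq_le hβ fun j => hx _
  · refine Or.inr ⟨1, le_rfl, ?_⟩
    rw [hrec, abs_div, pow_one, abs_of_pos (zero_lt_one.trans hβ)]

lemma exists_expansion (hβ : 1 < β) (hβm : β ≤ m + 1) {z : ℝ} (hz0 : 0 ≤ z)
    (hz : z ≤ m / (β - 1)) : ∃ x : ℕ → ℕ, (∀ i, x i ≤ m) ∧ valSeq β x = z := by
  have h1 : 0 < β - 1 := by linarith
  let digit : ℝ → ℕ := fun u => min m ⌊β * u⌋₊
  let orbit : ℕ → ℝ := fun i => (fun u => β * u - digit u)^[i] z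
  have hsucc : ∀ i, orbit (i + 1) = β * orbit i - digit (orbit i) := fun i =>
    Function.iterate_succ_apply' _ _ _
  have hmem : ∀ i, orbit i ∈ Icc 0 (m / (β - 1)) := by
    intro i
    induction i with
    | zero => exact ⟨hz0, hz⟩
    | succ i ih =>
      obtain ⟨hl, hu⟩ := ih
      have hfloor := Nat.floor_le (show 0 ≤ β * orbit i by positivity)
      have hlt := Nat.lt_floor_add_one (β * orbit i)
      rw [hsucc, mem_Icc]
      rcases le_total m ⌊β * orbit i⌋₊ with h | h
      · have hm : (m : ℝ) ≤ ⌊β * orbit i⌋₊ := by exact_mod_cast h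
        rw [show digit (orbit i) = m from min_eq_left h]
        rw [le_div_iff₀ h1] at hu ⊢
        exact ⟨by linarith, by nlinarith⟩
      · have hone : 1 ≤ m / (β - 1) := by rw [le_div_iff₀ h1]; linarith
        rw [show digit (orbit i) = ⌊β * orbit i⌋₊ from min_eq_right h]
        exact ⟨by linarith, by linarith⟩
  refine ⟨fun i => digit (orbit i), fun i => min_le_left _ _, ?_⟩
  refine valSeq_shiftn_eq_of_orbit hβ (m := m) (C := m / (β - 1)) (fun i => min_le_left _ _)
    (fun i => ?_) hsucc 0
  rw [abs_of_nonneg (hmem i).1]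
  exact (hmem i).2

lemma exists_base_valSeq_eq_one (hx : ∀ i, x i ≤ m) {i j : ℕ} (hij : i < j) (hi : 0 < x i)
    (hj : 0 < x j) : ∃ β : ℝ, 1 < β ∧ β ≤ m + 1 ∧ valSeq β x = 1 := by
  set a : ℝ := 2 ^ (1 / ((j : ℝ) + 1)) with ha
  have ha1 : 1 < a := Real.one_lt_rpow (by norm_num) (by positivity)
  have haj : a ^ (j + 1) = 2 := by
    rw [ha, ← Real.rpow_natCast, ← Real.rpow_mul (by norm_num)]
    push_cast
    rw [one_div_mul_cancel (by positivity), Real.rpow_one]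
  have hm : (1 : ℝ) ≤ m := by exact_mod_cast hi.trans_le (hx i)
  have ham : a ≤ m + 1 := by
    have := le_self_pow₀ ha1.le j.succ_ne_zero
    rw [Nat.succ_eq_add_one, haj] at this
    linarith
  have hlow : valSeq (m + 1) x ≤ 1 := by
    refine (valSeq_le (by linarith) hx).trans ?_
    rw [add_sub_cancel_right, div_self (by positivity)]
  have hhalf : ∀ k ≤ j, 0 < x k → 1 / 2 ≤ x k / a ^ (k + 1) := by
    intro k hk hxk
    rw [← haj]
    gcongr
    exacts [by exact_mod_cast hxk, ha1.le]
  have hhigh : 1 ≤ valSeq a x := by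
    have hsum := (summable_valSeq ha1 hx).sum_le_tsum {i, j} fun i _ => by positivity
    rw [Finset.sum_pair hij.ne] at hsum
    refine le_trans ?_ hsum
    linarith [hhalf i hij.le hi, hhalf j le_rfl hj]
  obtain ⟨β, hβ, h⟩ := intermediate_value_Icc' ham
    ((continuousOn_valSeq ha1 hx).mono Icc_subset_Ici_self) ⟨hlow, hhigh⟩
  exact ⟨β, ha1.trans_le hβ.1, hβ.2, h⟩

end Values

/-! ### The generalized Thue–Morse sequence -/

section KLSeq

variable {m n : ℕ}

/-- The lexicographic characterisation of the expansions of `1` that are unique among the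
expansions with digits in `{0, …, m}`. -/
structure LexUnivoque (m : ℕ) (x : ℕ → ℕ) : Prop where
  le : ∀ i, x i ≤ m
  shiftn_lt : ∀ n, 0 < n → seqLt (shiftn n x) x
  reflect_lt : ∀ n, seqLt (reflect m (shiftn n x)) x

/-- The generalized Thue–Morse sequence over `{0, …, m}`, given by its doubling recursion; it is
the expansion of `1` in base `klConst m`. -/
def klSeq (m : ℕ) (j : ℕ) : ℕ :=
  if h : j = 0 then m / 2 + 1
  else m - klSeq m (j - 2 ^ Nat.log 2 j) + if j + 1 = 2 ^ (Nat.log 2 j + 1) then 1 else 0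
termination_by j
decreasing_by
  have : 0 < 2 ^ Nat.log 2 j := by positivity
  omega

lemma klSeq_zero (m : ℕ) : klSeq m 0 = m / 2 + 1 := by
  rw [klSeq, dif_pos rfl]

lemma klSeq_two_pow_add (m : ℕ) {i : ℕ} (hi : i < 2 ^ n) :
    klSeq m (2 ^ n + i) = m - klSeq m i + if i + 1 = 2 ^ n then 1 else 0 := by
  have hlog : Nat.log 2 (2 ^ n + i) = n :=
    Nat.log_eq_of_pow_le_of_lt_pow (by omega) (by rw [pow_succ]; omega)
  rw [klSeq, dif_neg (by omega), hlog, Nat.add_sub_cancel_left, pow_succ]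
  congr 2
  exact propext (by omega)

lemma klSeq_two_pow_sub_one_pos (m n : ℕ) : 0 < klSeq m (2 ^ n - 1) := by
  cases n with
  | zero => simp [klSeq_zero]
  | succ n =>
    have hpos := Nat.two_pow_pos n
    rw [show 2 ^ (n + 1) - 1 = 2 ^ n + (2 ^ n - 1) by rw [pow_succ]; omega,
      klSeq_two_pow_add m (by omega), if_pos (by omega)]
    exact Nat.succ_pos _

lemma klSeq_le [NeZero m] (i : ℕ) : klSeq m i ≤ m := by
  induction i using Nat.strong_induction_on with
  | _ i ih =>
    rcases Nat.eq_zero_or_pos i with rfl | hi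
    · have := NeZero.pos m
      rw [klSeq_zero]
      omega
    · have hle := Nat.pow_log_le_self 2 hi.ne'
      have hlt := Nat.lt_pow_succ_log_self (b := 2) (by norm_num) i
      obtain ⟨k, hk⟩ := Nat.exists_eq_add_of_le hle
      have hpos := Nat.two_pow_pos (Nat.log 2 i)
      rw [pow_succ] at hlt
      rw [hk, klSeq_two_pow_add m (by omega)]
      split_ifs with hlast
      · have hk_pos := klSeq_two_pow_sub_one_pos m (Nat.log 2 i)
        rw [← hlast, Nat.add_sub_cancel] at hk_pos
        have := ih k (by omega)
        omega
      · omega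

lemma word_shiftn_two_pow_add_klSeq (m : ℕ) {k : ℕ} (hk : k < 2 ^ n) :
    word (2 ^ n - k) (shiftn (2 ^ n + k) (klSeq m)) =
      wplus (word (2 ^ n - k) (reflect m (shiftn k (klSeq m)))) := by
  obtain ⟨p, hp⟩ : ∃ p, 2 ^ n - k = p + 1 := ⟨2 ^ n - k - 1, by omega⟩
  have hdigit : ∀ r ≤ p, shiftn (2 ^ n + k) (klSeq m) r =
      reflect m (shiftn k (klSeq m)) r + if r = p then 1 else 0 := by
    intro r hr
    rw [shiftn, add_left_comm, klSeq_two_pow_add m (by omega)]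
    simp only [reflect, shiftn]
    congr 2
    exact propext (by omega)
  rw [hp, word_succ, word_succ, wplus_append_singleton, hdigit p le_rfl, if_pos rfl]
  congr 1
  exact word_eq_word_iff.2 fun r hr => by rw [hdigit r hr.le, if_neg hr.ne, add_zero]

lemma word_shiftn_two_pow_klSeq (m n : ℕ) :
    word (2 ^ n) (shiftn (2 ^ n) (klSeq m)) = wplus (word (2 ^ n) (reflect m (klSeq m))) :=
  word_shiftn_two_pow_add_klSeq m (Nat.two_pow_pos n)

lemma word_shiftn_two_pow_klSeq_of_lt (m : ℕ) {i : ℕ} (hi : i < 2 ^ n) :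
    word i (shiftn (2 ^ n) (klSeq m)) = word i (reflect m (klSeq m)) := by
  refine word_eq_word_iff.2 fun r hr => ?_
  rw [shiftn, add_comm, klSeq_two_pow_add m (by omega), if_neg (by omega), add_zero, reflect]

lemma word_reflect_klSeq_lt_word_klSeq (m : ℕ) (hn : 0 < n) :
    word n (reflect m (klSeq m)) < word n (klSeq m) := by
  refine word_lt_word_iff.2 ⟨0, hn, fun i hi => absurd hi i.not_lt_zero, ?_⟩
  rw [reflect, klSeq_zero]
  omega

lemma word_shiftn_lt_word_of_lt {x y : ℕ → ℕ} {N i : ℕ} (hi : i ≤ N)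
    (hle : word (N - i) (shiftn i x) ≤ word (N - i) x) (hxy : word i (shiftn N x) = word i y)
    (hlt : word i y < word i (shiftn (N - i) x)) : word N (shiftn i x) < word N x := by
  rw [← Nat.sub_add_cancel hi, word_add_lt_word_add_iff, shiftn_shiftn, Nat.sub_add_cancel hi,
    hxy]
  exact hle.lt_or_eq.imp_right fun heq => ⟨heq, hlt⟩

theorem word_klSeq_bounds [NeZero m] (n : ℕ) : ∀ i, 0 < i → i < 2 ^ n →
    word (2 ^ n - i) (reflect m (klSeq m)) < word (2 ^ n - i) (shiftn i (klSeq m)) ∧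
      word (2 ^ n - i) (shiftn i (klSeq m)) ≤ word (2 ^ n - i) (klSeq m) := by
  induction n with
  | zero => intro i hi hi1; rw [pow_zero] at hi1; omega
  | succ n ih =>
    intro i hi hi2
    have hpow : 2 ^ (n + 1) = 2 ^ n + 2 ^ n := by ring
    rw [hpow] at hi2 ⊢
    rcases lt_trichotomy i (2 ^ n) with hin | rfl | hin
    · obtain ⟨hlower, hupper⟩ := ih i hi hin
      refine ⟨word_lt_word_mono (by omega) hlower, (word_lt_word_mono (by omega)
        (word_shiftn_lt_word_of_lt hin.le hupper (word_shiftn_two_pow_klSeq_of_lt m hin) ?_)).le⟩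
      simpa [Nat.sub_sub_self hin.le] using (ih (2 ^ n - i) (by omega) (by omega)).1
    · rw [Nat.add_sub_cancel, word_shiftn_two_pow_klSeq, wplus_le_iff word_ne_nil (by simp),
        lt_wplus_iff word_ne_nil (by simp)]
      exact ⟨le_rfl, word_reflect_klSeq_lt_word_klSeq m hi⟩
    · obtain ⟨k, rfl⟩ := Nat.exists_eq_add_of_le hin.le
      obtain ⟨hlower, hupper⟩ := ih k (by omega) (by omega)
      have : NeZero (2 ^ n - k) := ⟨by omega⟩
      rw [Nat.add_sub_add_left, word_shiftn_two_pow_add_klSeq m (by omega),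
        wplus_le_iff word_ne_nil (by simp), lt_wplus_iff word_ne_nil (by simp)]
      refine ⟨word_reflect_le_word_reflect klSeq_le hupper, ?_⟩
      simpa only [reflect_reflect klSeq_le] using
        word_reflect_lt_word_reflect (y := shiftn k (klSeq m)) (fun j => klSeq_le _) hlower

theorem klSeq_lexUnivoque (m : ℕ) [NeZero m] : LexUnivoque m (klSeq m) where
  le := klSeq_le
  shiftn_lt n hn := by
    have hlt : n < 2 ^ n := Nat.lt_two_pow_self
    refine seqLt_iff_exists_word_lt.2 ⟨2 ^ n, word_shiftn_lt_word_of_lt hlt.le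
      (word_klSeq_bounds n n hn hlt).2 (word_shiftn_two_pow_klSeq_of_lt m hlt) ?_⟩
    simpa [Nat.sub_sub_self hlt.le] using
      (word_klSeq_bounds (m := m) n (2 ^ n - n) (by omega) (by omega)).1
  reflect_lt n := by
    rcases Nat.eq_zero_or_pos n with rfl | hn
    · exact seqLt_iff_exists_word_lt.2 ⟨1, word_reflect_klSeq_lt_word_klSeq m one_pos⟩
    · have h := word_reflect_lt_word_reflect (fun j => klSeq_le _)
        (word_klSeq_bounds (m := m) n n hn Nat.lt_two_pow_self).1
      rw [reflect_reflect klSeq_le] at h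
      exact seqLt_iff_exists_word_lt.2 ⟨_, h⟩

end KLSeq

/-! ### Sequences confined between `klSeq` and its reflection -/

section Confined

variable {m n : ℕ} {b : ℕ → ℕ}

/-- All windows of length `2 ^ n` of `b` lie strictly between the prefixes of the reflected
sequence `klSeq m` and of `klSeq m` itself. -/
structure Confined (m n : ℕ) (b : ℕ → ℕ) : Prop where
  le : ∀ i, b i ≤ m
  lt : ∀ i, word (2 ^ n) (shiftn i b) < word (2 ^ n) (klSeq m)
  reflect_lt : ∀ i, word (2 ^ n) (reflect m (klSeq m)) < word (2 ^ n) (shiftn i b)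

/-- Some tail of `b` is periodic. -/
def EventuallyPeriodic (b : ℕ → ℕ) : Prop :=
  ∃ i p, 0 < p ∧ Function.Periodic (shiftn i b) p

protected lemma Confined.shiftn (h : Confined m n b) (i : ℕ) : Confined m n (shiftn i b) where
  le j := h.le _
  lt j := by simpa only [shiftn_shiftn] using h.lt (j + i)
  reflect_lt j := by simpa only [shiftn_shiftn] using h.reflect_lt (j + i)

protected lemma Confined.reflect [NeZero m] (h : Confined m n b) : Confined m n (reflect m b) where
  le := reflect_le m b
  lt i := by
    have := word_reflect_lt_word_reflect (fun j => h.le (j + i)) (h.reflect_lt i)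
    rwa [reflect_reflect klSeq_le] at this
  reflect_lt i := word_reflect_lt_word_reflect klSeq_le (h.lt i)

lemma Confined.word_shiftn_eq (h : Confined m (n + 1) b)
    (hb : word (2 ^ n) b = word (2 ^ n) (klSeq m)) :
    word (2 ^ n) (shiftn (2 ^ n) b) = word (2 ^ n) (reflect m (klSeq m)) := by
  have hpow : 2 ^ (n + 1) = 2 ^ n + 2 ^ n := by ring
  refine le_antisymm ?_ (word_le_word_anti (hpow ▸ Nat.le_add_left _ _)
    (h.reflect_lt (2 ^ n)).le)
  have hlt := h.lt 0
  rw [hpow, word_add_lt_word_add_iff] at hlt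
  rw [← lt_wplus_iff word_ne_nil (by simp), ← word_shiftn_two_pow_klSeq]
  exact (hlt.resolve_left hb.not_lt).2

lemma Confined.antiperiodic [NeZero m] (h : Confined m (n + 1) b)
    (hb : word (2 ^ n) b = word (2 ^ n) (klSeq m)) (i : ℕ) : b (i + 2 ^ n) = m - b i := by
  have hwindow := h.word_shiftn_eq hb
  induction i using Nat.strong_induction_on generalizing b with
  | _ i ih =>
    rcases lt_or_ge i (2 ^ n) with hi | hi
    · rw [word_eq_word_iff.1 hb i hi]
      exact word_eq_word_iff.1 hwindow i hi
    · obtain ⟨k, rfl⟩ := Nat.exists_eq_add_of_le' hi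
      have hconf := (h.shiftn (2 ^ n)).reflect
      have hb' := word_reflect_eq_word_reflect (m := m) hwindow
      rw [reflect_reflect klSeq_le] at hb'
      have := ih k (by have := Nat.two_pow_pos n; omega) hconf hb' (hconf.word_shiftn_eq hb')
      have := h.le (k + 2 ^ n)
      have := h.le (k + 2 ^ n + 2 ^ n)
      simp only [reflect, shiftn] at *
      omega

lemma Confined.periodic [NeZero m] (h : Confined m (n + 1) b)
    (hb : word (2 ^ n) b = word (2 ^ n) (klSeq m)) : Function.Periodic b (2 ^ (n + 1)) := by
  intro i
  rw [pow_succ, mul_two, ← add_assoc, h.antiperiodic hb, h.antiperiodic hb,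
    Nat.sub_sub_self (h.le i)]

lemma Confined.eq_half (h : Confined m 0 b) (i : ℕ) : b i = m / 2 := by
  have hlt := h.lt i
  have hlo := h.reflect_lt i
  simp only [word, pow_zero, List.range_one, List.map_cons, List.map_nil, List.cons_lt_cons_iff,
    List.not_lt_nil, and_false, or_false, shiftn, zero_add, reflect, klSeq_zero] at hlt hlo
  omega

lemma EventuallyPeriodic.of_shiftn {i : ℕ} (h : EventuallyPeriodic (shiftn i b)) :
    EventuallyPeriodic b := by
  obtain ⟨j, p, hp, hper⟩ := h
  exact ⟨j + i, p, hp, shiftn_shiftn j i b ▸ hper⟩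

protected lemma EventuallyPeriodic.reflect (m : ℕ) (h : EventuallyPeriodic b) :
    EventuallyPeriodic (reflect m b) := by
  obtain ⟨i, p, hp, hper⟩ := h
  exact ⟨i, p, hp, fun j => congrArg (m - ·) (hper j)⟩

theorem Confined.eventuallyPeriodic [NeZero m] (h : Confined m n b) : EventuallyPeriodic b := by
  induction n with
  | zero => exact ⟨0, 1, one_pos, fun j => (h.eq_half _).trans (h.eq_half _).symm⟩
  | succ n ih =>
    have hperiodic : ∀ {c}, Confined m (n + 1) c →
        word (2 ^ n) c = word (2 ^ n) (klSeq m) → EventuallyPeriodic c :=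
      fun hc hw => ⟨0, _, by positivity, hc.periodic hw⟩
    by_cases hw : ∃ i, word (2 ^ n) (shiftn i b) = word (2 ^ n) (klSeq m)
    · obtain ⟨i, hi⟩ := hw
      exact (hperiodic (h.shiftn i) hi).of_shiftn
    by_cases hw' : ∃ i, word (2 ^ n) (shiftn i b) =
        word (2 ^ n) (reflect m (klSeq m))
    · obtain ⟨i, hi⟩ := hw'
      have hi' := word_reflect_eq_word_reflect (m := m) hi
      rw [reflect_reflect klSeq_le] at hi'
      have := (hperiodic (h.shiftn i).reflect hi').reflect m
      rw [reflect_reflect (h.shiftn i).le] at this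
      exact this.of_shiftn
    push Not at hw hw'
    have hpow : 2 ^ n ≤ 2 ^ (n + 1) := Nat.pow_le_pow_right two_pos n.le_succ
    exact ih ⟨h.le, fun i => (word_le_word_anti hpow (h.lt i).le).lt_of_ne (hw i),
      fun i => (word_le_word_anti hpow (h.reflect_lt i).le).lt_of_ne (hw' i).symm⟩

lemma word_lt_word_klSeq (hup : seqLe b (klSeq m))
    (hlo : ∀ i, word (2 ^ n) (reflect m (klSeq m)) < word (2 ^ n) (shiftn i b)) :
    word (2 ^ n) b < word (2 ^ n) (klSeq m) := by
  have hle := seqLe_iff_forall_word_le.1 hup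
  refine (hle _).lt_of_ne fun heq => ?_
  have hle₂ := hle (2 ^ n + 2 ^ n)
  rw [word_add_le_word_add_iff] at hle₂
  have heq₂ : word (2 ^ (n + 1)) b = word (2 ^ (n + 1)) (klSeq m) := by
    rw [pow_succ, mul_two, word_add, word_add, heq]
    refine congrArg _ (le_antisymm (hle₂.resolve_left heq.not_lt).2 ?_)
    rw [word_shiftn_two_pow_klSeq, wplus_le_iff word_ne_nil (by simp)]
    exact hlo _
  have hle₃ := hle (2 ^ (n + 1) + 2 ^ n)
  rw [word_add_le_word_add_iff, word_shiftn_two_pow_klSeq_of_lt m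
    (Nat.pow_lt_pow_right one_lt_two n.lt_succ_self)] at hle₃
  exact (hle₃.resolve_left heq₂.not_lt).2.not_gt (hlo _)

lemma confined_of_seqLe (hb : ∀ i, b i ≤ m) (hup : ∀ i, seqLe (shiftn i b) (klSeq m))
    (hlo : ∀ i, word (2 ^ n) (reflect m (klSeq m)) < word (2 ^ n) (shiftn i b)) :
    Confined m n b where
  le := hb
  lt i := word_lt_word_klSeq (hup i) fun j => shiftn_shiftn j i b ▸ hlo _
  reflect_lt := hlo

lemma countable_setOf_eventuallyPeriodic : {b | EventuallyPeriodic b}.Countable := by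
  have hcount : ∀ i p, 0 < p → {b | Function.Periodic (shiftn i b) p}.Countable := by
    intro i p hp
    refine (mapsTo_univ (word (i + p)) _).countable_of_injOn (fun b hb c hc h => ?_)
      (to_countable univ)
    have hagree := word_eq_word_iff.1 h
    funext j
    rcases lt_or_ge j i with hj | hj
    · exact hagree j (by omega)
    · obtain ⟨k, rfl⟩ := Nat.exists_eq_add_of_le' hj
      have hmod := hagree (k % p + i) (by have := Nat.mod_lt k hp; omega)
      exact (hb.map_mod_nat k).symm.trans (hmod.trans (hc.map_mod_nat k))
  refine (countable_iUnion fun i => countable_iUnion fun p =>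
    countable_iUnion fun hp => hcount i p hp).mono ?_
  rintro b ⟨i, p, hp, hb⟩
  simp only [mem_iUnion]
  exact ⟨i, p, hp, hb⟩

lemma LexUnivoque.shiftn_le {x : ℕ → ℕ} (h : LexUnivoque m x) (i : ℕ) : seqLe (shiftn i x) x := by
  rcases Nat.eq_zero_or_pos i with rfl | hi
  · exact Or.inl rfl
  · exact Or.inr (h.shiftn_lt i hi)

lemma LexUnivoque.shiftn_ne {x : ℕ → ℕ} (h : LexUnivoque m x) {i : ℕ} (hi : 0 < i) :
    shiftn i x ≠ x := by
  intro heq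
  obtain ⟨n, hn⟩ := seqLt_iff_exists_word_lt.1 (h.shiftn_lt i hi)
  exact hn.ne (by rw [heq])

lemma LexUnivoque.confined [NeZero m] {x : ℕ → ℕ} (h : LexUnivoque m x)
    (hx : word (2 ^ n) x < word (2 ^ n) (klSeq m)) : Confined m n x where
  le := h.le
  lt i := (seqLe_iff_forall_word_le.1 (h.shiftn_le i) _).trans_lt hx
  reflect_lt i := by
    have hle := seqLe_iff_forall_word_le.1 (Or.inr (h.reflect_lt i)) (2 ^ n)
    have := word_reflect_lt_word_reflect (klSeq_le (m := m)) (hle.trans_lt hx)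
    rwa [reflect_reflect (x := shiftn i x) fun j => h.le _] at this

theorem LexUnivoque.klSeq_seqLe [NeZero m] {x : ℕ → ℕ} (h : LexUnivoque m x) :
    seqLe (klSeq m) x := by
  rw [← not_seqLt_iff_seqLe, seqLt_iff_exists_word_lt]
  intro hlt
  have hexists : ∃ n, word (2 ^ n) x < word (2 ^ n) (klSeq m) :=
    hlt.imp fun n => word_lt_word_mono Nat.lt_two_pow_self.le
  classical
  have hconf := h.confined (Nat.find_spec hexists)
  rcases hn : Nat.find hexists with _ | n
  · rw [hn] at hconf
    exact h.shiftn_ne one_pos (funext fun i => (hconf.eq_half _).trans (hconf.eq_half _).symm)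
  · rw [hn] at hconf
    have hle : word (2 ^ n) x ≤ word (2 ^ n) (klSeq m) :=
      word_le_word_anti (Nat.pow_le_pow_right two_pos n.le_succ) (hconf.lt 0).le
    have heq := hle.eq_of_not_lt (Nat.find_min hexists (hn ▸ n.lt_succ_self))
    exact h.shiftn_ne (by positivity) (funext (hconf.periodic heq))

end Confined

/-! ### Unique expansions of one -/

section Univoque

variable {β : ℝ} {m : ℕ} {x y : ℕ → ℕ}

/-- `x` is the only expansion over the digits `{0, …, m}` of its value in base `β`. -/
def IsUniqueExpansion (β : ℝ) (m : ℕ) (x : ℕ → ℕ) : Prop :=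
  (∀ i, x i ≤ m) ∧ ∀ y : ℕ → ℕ, (∀ i, y i ≤ m) → valSeq β y = valSeq β x → y = x

namespace LexUnivoque

protected lemma valSeq_shiftn_le_one (h : LexUnivoque m x) (hβ : 1 < β) (hone : valSeq β x = 1)
    (i : ℕ) : valSeq β (shiftn i x) ≤ 1 :=
  valSeq_shiftn_le_one hβ h.le h.le hone h.shiftn_le i

lemma valSeq_reflect_shiftn_le_one (h : LexUnivoque m x) (hβ : 1 < β) (hone : valSeq β x = 1)
    (i : ℕ) : valSeq β (reflect m (shiftn i x)) ≤ 1 :=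
  valSeq_shiftn_le_one hβ (x := reflect m x) (reflect_le m x) h.le hone
    (fun i => Or.inr (h.reflect_lt i)) i

lemma critical_le_valSeq_shiftn (h : LexUnivoque m x) (hβ : 1 < β) (hone : valSeq β x = 1)
    (i : ℕ) : m / (β - 1) - 1 ≤ valSeq β (shiftn i x) := by
  have hle := h.valSeq_reflect_shiftn_le_one hβ hone i
  rw [valSeq_reflect_shiftn hβ h.le] at hle
  linarith

lemma critical_pos (h : LexUnivoque m x) (hβ : 1 < β) (hone : valSeq β x = 1) :
    0 < m / (β - 1) - 1 := by
  have hval := valSeq_reflect hβ h.le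
  rw [hone] at hval
  rw [← hval]
  obtain ⟨i, hi⟩ : ∃ i, x i ≠ m := by
    by_contra! hconst
    exact h.shiftn_ne one_pos (funext fun i => (hconst _).trans (hconst i).symm)
  exact valSeq_pos hβ (reflect_le m x) (Nat.sub_pos_of_lt ((h.le i).lt_of_ne hi))

lemma valSeq_lt_one (h : LexUnivoque m x) (hβ : 1 < β) (hone : valSeq β x = 1)
    (hy : ∀ i, y i ≤ m) (hyt : ∀ p, valSeq β (shiftn p y) ≤ 1) (hlt : seqLt y x) :
    valSeq β y < 1 := by
  obtain ⟨n, hn⟩ := seqLt_iff_exists_word_lt.1 hlt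
  have hcrit := h.critical_pos hβ hone
  have hgap : 0 < (m / (β - 1) - 1) / β ^ n := by positivity
  have := valSeq_add_le_of_word_lt hβ hy h.le (fun p _ => hyt p) hcrit.le
    (h.critical_le_valSeq_shiftn hβ hone) hn
  linarith

lemma valSeq_shiftn_lt_one (h : LexUnivoque m x) (hβ : 1 < β) (hone : valSeq β x = 1) {i : ℕ}
    (hi : 0 < i) : valSeq β (shiftn i x) < 1 :=
  h.valSeq_lt_one hβ hone (fun _ => h.le _)
    (fun p => shiftn_shiftn p i x ▸ h.valSeq_shiftn_le_one hβ hone _) (h.shiftn_lt i hi)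

lemma critical_lt_valSeq_shiftn (h : LexUnivoque m x) (hβ : 1 < β) (hone : valSeq β x = 1)
    (i : ℕ) : m / (β - 1) - 1 < valSeq β (shiftn i x) := by
  have hlt : valSeq β (reflect m (shiftn i x)) < 1 :=
    h.valSeq_lt_one hβ hone (reflect_le m _)
      (fun p => shiftn_shiftn p i (reflect m x) ▸ h.valSeq_reflect_shiftn_le_one hβ hone (p + i))
      (h.reflect_lt i)
  rw [valSeq_reflect_shiftn hβ h.le] at hlt
  linarith

theorem isUniqueExpansion (h : LexUnivoque m x) (hβ : 1 < β) (hone : valSeq β x = 1) :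
    IsUniqueExpansion β m x := by
  refine ⟨h.le, fun y hy hval => ?_⟩
  by_contra hne
  obtain ⟨j, hj, heq⟩ := exists_minimal_of_wellFoundedLT _ (Function.ne_iff.1 hne)
  have hsub := valSeq_sub_of_agree hβ hy h.le (n := j) fun i hi =>
    not_not.1 fun hne => hi.not_ge (heq hne hi.le)
  rw [hval, sub_self, eq_comm, div_eq_zero_iff, or_iff_left (by positivity)] at hsub
  rcases Nat.lt_or_gt_of_ne hj with hlt | hlt
  · have hdigit : (y j : ℝ) + 1 ≤ x j := by exact_mod_cast hlt
    linarith [valSeq_le hβ (x := shiftn (j + 1) y) fun i => hy _,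
      h.critical_lt_valSeq_shiftn hβ hone (j + 1)]
  · have hdigit : (x j : ℝ) + 1 ≤ y j := by exact_mod_cast hlt
    linarith [valSeq_nonneg hβ (shiftn (j + 1) y), h.valSeq_shiftn_lt_one hβ hone j.succ_pos]

end LexUnivoque

namespace IsUniqueExpansion

protected lemma reflect (h : IsUniqueExpansion β m x) (hβ : 1 < β) :
    IsUniqueExpansion β m (reflect m x) := by
  refine ⟨reflect_le m x, fun y hy hval => ?_⟩
  rw [← reflect_reflect hy, h.2 (reflect m y) (reflect_le m y)]
  rw [valSeq_reflect hβ hy, hval, valSeq_reflect hβ h.1, sub_sub_cancel]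

protected lemma shiftn (h : IsUniqueExpansion β m x) (hβ : 1 < β) (n : ℕ) :
    IsUniqueExpansion β m (shiftn n x) := by
  refine ⟨fun i => h.1 _, fun y hy hval => ?_⟩
  set z : ℕ → ℕ := fun i => if i < n then x i else y (i - n)
  have hz : ∀ i, z i ≤ m := fun i => by
    dsimp only [z]
    split_ifs
    exacts [h.1 i, hy _]
  have hzy : shiftn n z = y := funext fun i => by simp [shiftn, z]
  rw [← h.2 z hz, hzy]
  rw [← sub_eq_zero, valSeq_sub_of_word_eq hβ hz h.1 (n := n)
    (word_eq_word_iff.2 fun i hi => if_pos hi), hzy, hval, sub_self, zero_div]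

lemma valSeq_shiftn_one_lt_one (h : IsUniqueExpansion β m x) (hβ : 1 < β) (hβm : β ≤ m + 1)
    (hx : x 0 < m) : valSeq β (shiftn 1 x) < 1 := by
  by_contra! hge
  have hle := valSeq_le hβ (x := shiftn 1 x) fun i => h.1 _
  obtain ⟨e, he, hval⟩ := exists_expansion hβ hβm (sub_nonneg.2 hge) (by linarith)
  set z : ℕ → ℕ := fun i => if i = 0 then x 0 + 1 else e (i - 1)
  have hz : ∀ i, z i ≤ m := fun i => by
    dsimp only [z]
    split_ifs
    exacts [hx, he _]
  have hz0 : z 0 = x 0 + 1 := if_pos rfl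
  have hze : shiftn 1 z = e := funext fun i => by simp [shiftn, z]
  have hzx := h.2 z hz <| by
    rw [valSeq_eq_head_add hβ hz, valSeq_eq_head_add hβ h.1, hze, hval, hz0]
    push_cast
    ring
  exact (x 0).succ_ne_self (hz0.symm.trans (congrFun hzx 0))

lemma valSeq_shiftn_succ_lt_one (h : IsUniqueExpansion β m x) (hβ : 1 < β) (hβm : β ≤ m + 1)
    {i : ℕ} (hi : x i < m) : valSeq β (shiftn (i + 1) x) < 1 := by
  rw [add_comm, ← shiftn_shiftn]
  exact (h.shiftn hβ i).valSeq_shiftn_one_lt_one hβ hβm (by rwa [shiftn, zero_add])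

lemma critical_lt_valSeq_shiftn_succ (h : IsUniqueExpansion β m x) (hβ : 1 < β)
    (hβm : β ≤ m + 1) {i : ℕ} (hi : 0 < x i) :
    m / (β - 1) - 1 < valSeq β (shiftn (i + 1) x) := by
  have hlt : valSeq β (reflect m (shiftn (i + 1) x)) < 1 :=
    (h.reflect hβ).valSeq_shiftn_succ_lt_one hβ hβm (Nat.sub_lt (hi.trans_le (h.1 i)) hi)
  rw [valSeq_reflect_shiftn hβ h.1] at hlt
  linarith

lemma valSeq_shiftn_lt_one (h : IsUniqueExpansion β m x) (hβ : 1 < β) (hβm : β < m + 1)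
    (hone : valSeq β x = 1) {i : ℕ} (hi : 0 < i) : valSeq β (shiftn i x) < 1 := by
  have hstep : ∀ i, valSeq β (shiftn i x) ≤ 1 → valSeq β (shiftn (i + 1) x) < 1 := by
    intro i hle
    rcases (h.1 i).lt_or_eq with hlt | heq
    · exact h.valSeq_shiftn_succ_lt_one hβ hβm.le hlt
    · rw [valSeq_shiftn_succ hβ h.1, heq]
      nlinarith
  induction i, hi using Nat.le_induction with
  | base => exact hstep 0 hone.le
  | succ i _ ih => exact hstep i ih.le

lemma critical_lt_valSeq_shiftn (h : IsUniqueExpansion β m x) (hβ : 1 < β) (hβm : β < m + 1)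
    (hone : valSeq β x = 1) (i : ℕ) : m / (β - 1) - 1 < valSeq β (shiftn i x) := by
  have hlt := h.valSeq_shiftn_lt_one hβ hβm hone one_pos
  have hdigit : 0 < x 0 := by
    refine Nat.pos_of_ne_zero fun h0 => ?_
    have hsucc := valSeq_shiftn_succ hβ h.1 0
    rw [h0, show shiftn 0 x = x from rfl, hone] at hsucc
    norm_num at hsucc
    exact (hsucc ▸ hlt).not_gt hβ
  induction i with
  | zero =>
    rw [show shiftn 0 x = x from rfl, hone]
    exact (h.critical_lt_valSeq_shiftn_succ hβ hβm.le hdigit).trans hlt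
  | succ i ih =>
    rcases Nat.eq_zero_or_pos (x i) with h0 | hpos
    · rw [valSeq_shiftn_succ hβ h.1, h0]
      have := valSeq_nonneg hβ (shiftn i x)
      norm_num
      nlinarith
    · exact h.critical_lt_valSeq_shiftn_succ hβ hβm.le hpos

theorem lexUnivoque (h : IsUniqueExpansion β m x) (hβ : 1 < β) (hβm : β < m + 1)
    (hone : valSeq β x = 1) : LexUnivoque m x where
  le := h.1
  shiftn_lt i hi := by
    refine seqLt_of_valSeq_lt hβ (fun _ => h.1 _) h.1
      (fun p hp => (h.valSeq_shiftn_lt_one hβ hβm hone hp).le) ?_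
    rw [hone]
    exact h.valSeq_shiftn_lt_one hβ hβm hone hi
  reflect_lt i := by
    refine seqLt_of_valSeq_lt hβ (reflect_le m _) h.1
      (fun p hp => (h.valSeq_shiftn_lt_one hβ hβm hone hp).le) ?_
    rw [valSeq_reflect_shiftn hβ h.1, hone]
    linarith [h.critical_lt_valSeq_shiftn hβ hβm hone i]

end IsUniqueExpansion

/-! ### The Komornik–Loreti constant -/

lemma le_base_of_lexUnivoque [NeZero m] {γ : ℝ} (hβ : 1 < β) (hone : valSeq β (klSeq m) = 1)
    (hγ : 1 < γ) (h : LexUnivoque m x) (hx : valSeq γ x = 1) : β ≤ γ := by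
  obtain ⟨i, hi⟩ : ∃ i, 0 < x i := by
    by_contra! hzero
    have : x = 0 := funext fun i => Nat.le_zero.1 (hzero i)
    simp [this, valSeq] at hx
  by_contra! hlt
  have hdecr := valSeq_strictAnti hγ hlt h.le hi
  rw [hx, ← hone] at hdecr
  have hkl := klSeq_lexUnivoque m
  refine not_seqLt_iff_seqLe.2 h.klSeq_seqLe (seqLt_of_valSeq_lt hβ h.le hkl.le ?_ hdecr)
  exact fun p _ => hkl.valSeq_shiftn_le_one hβ hone p

theorem isLeast_of_valSeq_klSeq_eq_one [NeZero m] (hβ : 1 < β) (hβm : β ≤ m + 1)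
    (hone : valSeq β (klSeq m) = 1) :
    IsLeast {β : ℝ | 1 < β ∧ ∃! c : ℕ → ℕ, (∀ i, c i ≤ m) ∧ valSeq β c = 1} β := by
  have hunique := (klSeq_lexUnivoque m).isUniqueExpansion hβ hone
  refine ⟨⟨hβ, klSeq m, ⟨klSeq_le, hone⟩,
    fun c hc => hunique.2 c hc.1 (hc.2.trans hone.symm)⟩, ?_⟩
  rintro γ ⟨hγ, c, ⟨hc, hc1⟩, huniq⟩
  rcases lt_or_ge γ (m + 1) with hγm | hγm
  · have hc' : IsUniqueExpansion γ m c := ⟨hc, fun y hy h => huniq y ⟨hy, h.trans hc1⟩⟩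
    exact le_base_of_lexUnivoque hβ hone hγ (hc'.lexUnivoque hγ hγm hc1) hc1
  · exact hβm.trans hγm

lemma klConst_spec (m : ℕ) [NeZero m] :
    1 < klConst m ∧ klConst m ≤ m + 1 ∧ valSeq (klConst m) (klSeq m) = 1 := by
  obtain ⟨β, hβ, hβm, hone⟩ := exists_base_valSeq_eq_one (klSeq_le (m := m)) one_pos
    (klSeq_two_pow_sub_one_pos m 0) (klSeq_two_pow_sub_one_pos m 1)
  rw [show klConst m = β from (isLeast_of_valSeq_klSeq_eq_one hβ hβm hone).csInf_eq]
  exact ⟨hβ, hβm, hone⟩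

lemma one_lt_klConst (m : ℕ) [NeZero m] : 1 < klConst m := (klConst_spec m).1

lemma klConst_le (m : ℕ) [NeZero m] : klConst m ≤ m + 1 := (klConst_spec m).2.1

lemma valSeq_klConst_klSeq (m : ℕ) [NeZero m] : valSeq (klConst m) (klSeq m) = 1 :=
  (klConst_spec m).2.2

end Univoque

/-! ### Renormalization words and their intervals -/

section Periodic

variable {m n : ℕ} {v w : List ℕ} {c : ℕ → ℕ}

lemma maxCyc_eq_of_isRotated (h : w ~r v) (hmax : ∀ k, v.rotate k ≤ v) : maxCyc w = v := by
  obtain ⟨k, rfl⟩ := h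
  have hmem : w.rotate k ∈ [] :: (List.range w.length).map w.rotate := by
    rcases eq_or_ne w [] with rfl | hw
    · simp
    · rw [← List.rotate_mod]
      exact List.mem_cons_of_mem _ (List.mem_map_of_mem
        (List.mem_range.2 (Nat.mod_lt _ (List.length_pos_iff.2 hw))))
  have hle : ∀ u ∈ [] :: (List.range w.length).map w.rotate, u ≤ w.rotate k := by
    simp only [List.mem_cons, List.mem_map, forall_eq_or_imp, forall_exists_index, and_imp,
      forall_apply_eq_imp_iff₂]
    refine ⟨not_lt.1 (List.not_lt_nil _), fun i _ => ?_⟩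
    obtain ⟨j, hj⟩ : w.rotate k ~r w.rotate i :=
      List.IsRotated.trans (List.IsRotated.symm ⟨k, rfl⟩) ⟨i, rfl⟩
    exact hj ▸ hmax j
  have hsome := List.max?_eq_some_iff.2 ⟨hmem, hle⟩
  rwa [List.max?_cons', Option.some_inj] at hsome

lemma subst_zero_one (w : List ℕ) : subst w [0, 1] = wminus w ++ wplus (maxCyc w) := by
  simp [subst, phiAux, phiBlock]

lemma shiftn_length_perSeq (w : List ℕ) : shiftn w.length (perSeq w) = perSeq w :=
  funext fun i => by rw [shiftn, perSeq, perSeq, Nat.add_mod_right]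

lemma word_shiftn_perSeq (w : List ℕ) (i : ℕ) :
    word w.length (shiftn i (perSeq w)) = w.rotate i := by
  refine List.ext_getElem (by simp) fun j hj _ => ?_
  have hlen : 0 < w.length := by simp at hj; omega
  rw [getElem_word, List.getElem_rotate, shiftn, perSeq,
    List.getD_eq_getElem _ _ (Nat.mod_lt _ hlen)]

lemma word_perSeq (w : List ℕ) : word w.length (perSeq w) = w :=
  (word_shiftn_perSeq w 0).trans w.rotate_zero

lemma getD_le (hw : ∀ d ∈ w, d ≤ m) (i : ℕ) : w.getD i 0 ≤ m := by
  rcases lt_or_ge i w.length with hi | hi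
  · rw [List.getD_eq_getElem _ _ hi]
    exact hw _ (List.getElem_mem hi)
  · rw [List.getD_eq_default _ _ hi]
    exact m.zero_le

lemma perSeq_le (hw : ∀ d ∈ w, d ≤ m) (i : ℕ) : perSeq w i ≤ m := getD_le hw _

lemma wordSeq_le (hw : ∀ d ∈ w, d ≤ m) (hc : ∀ i, c i ≤ m) (i : ℕ) : wordSeq w c i ≤ m := by
  rw [wordSeq]
  split_ifs
  exacts [getD_le hw _, hc _]

lemma word_wordSeq (w : List ℕ) (c : ℕ → ℕ) : word w.length (wordSeq w c) = w := by
  refine List.ext_getElem (by simp) fun i _ hi => ?_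
  rw [getElem_word, wordSeq, if_pos hi, List.getD_eq_getElem _ _ hi]

lemma shiftn_length_wordSeq (w : List ℕ) (c : ℕ → ℕ) : shiftn w.length (wordSeq w c) = c :=
  funext fun i => by simp [shiftn, wordSeq]

lemma exists_perSeq_pos (hw : ∃ d ∈ w, 0 < d) : ∃ i < w.length, 0 < perSeq w i := by
  obtain ⟨d, hd, hpos⟩ := hw
  obtain ⟨i, hi, rfl⟩ := List.getElem_of_mem hd
  refine ⟨i, hi, ?_⟩
  rwa [perSeq, Nat.mod_eq_of_lt hi, List.getD_eq_getElem _ _ hi]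

end Periodic

section UnitBase

variable {β : ℝ} {m : ℕ} {x : ℕ → ℕ} {w : List ℕ}

/-- The base `β > 1` with `(x)_β = 1`: this is `β_ℓ^S` for `x = L(S)^∞` and `β_r^S` for
`x = L(S)⁺S^∞`. It is arbitrary when there is no such base. -/
noncomputable def unitBase (x : ℕ → ℕ) : ℝ := Classical.epsilon fun β : ℝ => 1 < β ∧ valSeq β x = 1

lemma unitBase_spec (hx : ∀ i, x i ≤ m) {i j : ℕ} (hij : i < j) (hi : 0 < x i) (hj : 0 < x j) :
    1 < unitBase x ∧ valSeq (unitBase x) x = 1 := by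
  obtain ⟨β, hβ, -, hone⟩ := exists_base_valSeq_eq_one hx hij hi hj
  exact Classical.epsilon_spec (p := fun β : ℝ => 1 < β ∧ valSeq β x = 1) ⟨β, hβ, hone⟩

lemma unitBase_le_of_valSeq_le_one (hβ : 1 < β) (hx : ∀ i, x i ≤ m) {i j : ℕ} (hij : i < j)
    (hi : 0 < x i) (hj : 0 < x j) (h : valSeq β x ≤ 1) : unitBase x ≤ β := by
  obtain ⟨-, hone⟩ := unitBase_spec hx hij hi hj
  by_contra! hlt
  exact (valSeq_strictAnti hβ hlt hx hi).not_ge (h.trans_eq hone.symm)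

lemma le_unitBase_of_one_le_valSeq (hx : ∀ i, x i ≤ m) {i j : ℕ} (hij : i < j)
    (hi : 0 < x i) (hj : 0 < x j) (h : 1 ≤ valSeq β x) : β ≤ unitBase x := by
  obtain ⟨hgt, hone⟩ := unitBase_spec hx hij hi hj
  by_contra! hlt
  exact (valSeq_strictAnti hgt hlt hx hi).not_ge (hone.trans_le h)

lemma betaL_le_of_valSeq_le_one (hβ : 1 < β) (hle : ∀ d ∈ maxCyc w, d ≤ m)
    (hpos : ∃ d ∈ maxCyc w, 0 < d) (h : valSeq β (perSeq (maxCyc w)) ≤ 1) : betaL w ≤ β := by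
  obtain ⟨i, hi, hdigit⟩ := exists_perSeq_pos hpos
  refine unitBase_le_of_valSeq_le_one hβ (perSeq_le hle) (j := i + (maxCyc w).length)
    (by omega) hdigit ?_ h
  rwa [show perSeq (maxCyc w) (i + (maxCyc w).length) = perSeq (maxCyc w) i from
    congrFun (shiftn_length_perSeq _) i]

end UnitBase

section Renormalization

variable {m n : ℕ}

/-- The word `λ_N ⋯ λ_{2N-1}` of the Komornik–Loreti sequence, with `N = 2 ^ n`. These are the
words `s₁ • 01 • ⋯ • 01` of the coding. -/
def renormWord (m n : ℕ) : List ℕ := word (2 ^ n) (shiftn (2 ^ n) (klSeq m))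

/-- The word `(λ_0 ⋯ λ_{N-1})⁻` with `N = 2 ^ n`, which is `L(renormWord m n)`. -/
def renormMax (m n : ℕ) : List ℕ := wminus (word (2 ^ n) (klSeq m))

lemma wplus_wminus_word {x : ℕ → ℕ} (hx : 0 < x n) :
    wplus (wminus (word (n + 1) x)) = word (n + 1) x := by
  rw [word_succ, wminus_append_singleton, wplus_append_singleton, Nat.sub_add_cancel hx]

lemma wplus_renormMax (m n : ℕ) : wplus (renormMax m n) = word (2 ^ n) (klSeq m) := by
  rw [renormMax, ← Nat.sub_add_cancel (Nat.one_le_two_pow (n := n)),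
    wplus_wminus_word (klSeq_two_pow_sub_one_pos m n)]

lemma length_renormMax (m n : ℕ) : (renormMax m n).length = 2 ^ n := by
  rw [renormMax, length_wminus word_ne_nil, length_word]

lemma renormWord_eq_wplus (m n : ℕ) :
    renormWord m n = wplus (word (2 ^ n) (reflect m (klSeq m))) :=
  word_shiftn_two_pow_klSeq m n

lemma wminus_renormWord (m n : ℕ) :
    wminus (renormWord m n) = word (2 ^ n) (reflect m (klSeq m)) := by
  rw [renormWord_eq_wplus, wminus_wplus word_ne_nil]

lemma word_shiftn_three_halves_klSeq [NeZero m] (n : ℕ) :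
    word (2 ^ n) (shiftn (2 ^ (n + 1) + 2 ^ n) (klSeq m)) = word (2 ^ n) (klSeq m) := by
  refine word_eq_word_iff.2 fun i hi => ?_
  have hpos : i + 1 = 2 ^ n → 0 < klSeq m i := by
    intro h
    rw [show i = 2 ^ n - 1 by omega]
    exact klSeq_two_pow_sub_one_pos m n
  have hle := klSeq_le (m := m) i
  have hdigit := klSeq_two_pow_add m (n := n + 1) (i := 2 ^ n + i) (by omega)
  rw [klSeq_two_pow_add m hi] at hdigit
  rw [shiftn, show i + (2 ^ (n + 1) + 2 ^ n) = 2 ^ (n + 1) + (2 ^ n + i) by ring, hdigit]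
  split_ifs <;> omega

lemma renormWord_succ [NeZero m] (n : ℕ) : renormWord m (n + 1) =
    word (2 ^ n) (reflect m (klSeq m)) ++ word (2 ^ n) (klSeq m) := by
  have hlt : 2 ^ n < 2 ^ (n + 1) := Nat.pow_lt_pow_right one_lt_two n.lt_succ_self
  rw [renormWord, ← word_shiftn_two_pow_klSeq_of_lt m hlt, ← word_shiftn_three_halves_klSeq n,
    add_comm (2 ^ (n + 1)), ← shiftn_shiftn, ← word_add]
  congr 1
  ring

lemma renormMax_succ (m n : ℕ) : renormMax m (n + 1) =
    word (2 ^ n) (klSeq m) ++ word (2 ^ n) (reflect m (klSeq m)) := by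
  rw [renormMax, pow_succ, mul_two, word_add, wminus_append _ word_ne_nil, ← wminus_renormWord,
    renormWord]

lemma renormWord_isRotated_renormMax [NeZero m] (hn : m % 2 ≤ n) :
    renormWord m n ~r renormMax m n := by
  cases n with
  | zero =>
    have hone : klSeq m 1 = m / 2 := by
      have hdigit : klSeq m 1 = m - klSeq m 0 + 1 := klSeq_two_pow_add m (n := 0) (i := 0) one_pos
      have := NeZero.pos m
      rw [hdigit, klSeq_zero]
      omega
    exact ⟨0, by simp [renormWord, renormMax, word, shiftn, wminus, klSeq_zero, hone]⟩
  | succ n =>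
    rw [renormWord_succ, renormMax_succ]
    exact List.isRotated_append

lemma wplus_wminus_word_shiftn_klSeq {k : ℕ} (hk : k < 2 ^ n) :
    wplus (wminus (word (2 ^ n - k) (shiftn k (klSeq m)))) =
      word (2 ^ n - k) (shiftn k (klSeq m)) := by
  obtain ⟨p, hp⟩ : ∃ p, 2 ^ n - k = p + 1 := ⟨2 ^ n - k - 1, by omega⟩
  rw [hp, wplus_wminus_word]
  rw [shiftn, show p + k = 2 ^ n - 1 by omega]
  exact klSeq_two_pow_sub_one_pos m n

lemma wminus_word_shiftn_klSeq_lt [NeZero m] {k : ℕ} (hk : k < 2 ^ n) :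
    wminus (word (2 ^ n - k) (shiftn k (klSeq m))) < word (2 ^ n - k) (klSeq m) := by
  have : NeZero (2 ^ n - k) := ⟨by omega⟩
  have hlen := length_wminus (word_ne_nil (n := 2 ^ n - k) (x := shiftn k (klSeq m)))
  rw [length_word] at hlen
  rw [← wplus_le_iff (List.ne_nil_of_length_pos (by omega)) (by rw [hlen, length_word]),
    wplus_wminus_word_shiftn_klSeq hk]
  exact seqLe_iff_forall_word_le.1 ((klSeq_lexUnivoque m).shiftn_le k) _

lemma renormMax_lt [NeZero m] (n : ℕ) : renormMax m n < word (2 ^ n) (klSeq m) :=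
  wminus_word_shiftn_klSeq_lt (k := 0) (Nat.two_pow_pos n)

lemma renormMax_eq_append {i k : ℕ} (hi : i + k = 2 ^ n) (hk : 0 < k) :
    renormMax m n = word i (klSeq m) ++ wminus (word k (shiftn i (klSeq m))) := by
  have : NeZero k := ⟨hk.ne'⟩
  rw [renormMax, ← hi, word_add, wminus_append _ word_ne_nil]

lemma renormMax_rotate_le [NeZero m] (n k : ℕ) : (renormMax m n).rotate k ≤ renormMax m n := by
  have hr := Nat.mod_lt k (Nat.two_pow_pos n)
  rw [← List.rotate_mod, length_renormMax]
  set r := k % 2 ^ n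
  rcases Nat.eq_zero_or_pos r with h0 | hpos
  · rw [h0, List.rotate_zero]
  have : NeZero (2 ^ n - r) := ⟨by omega⟩
  have hrot : (renormMax m n).rotate r =
      wminus (word (2 ^ n - r) (shiftn r (klSeq m))) ++ word r (klSeq m) := by
    rw [renormMax_eq_append (i := r) (k := 2 ^ n - r) (by omega) (by omega)]
    simpa only [length_word] using
      List.rotate_append_length_eq (word r (klSeq m)) (wminus (word (2 ^ n - r) _))
  rw [hrot, renormMax_eq_append (i := 2 ^ n - r) (by omega) hpos, append_le_append_iff
    (by rw [length_wminus word_ne_nil, length_word, length_word])]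
  exact Or.inl (wminus_word_shiftn_klSeq_lt hr)

lemma maxCyc_renormWord [NeZero m] (hn : m % 2 ≤ n) : maxCyc (renormWord m n) = renormMax m n :=
  maxCyc_eq_of_isRotated (renormWord_isRotated_renormMax hn) (renormMax_rotate_le n)

lemma subst_renormWord [NeZero m] (hn : m % 2 ≤ n) :
    subst (renormWord m n) [0, 1] = renormWord m (n + 1) := by
  rw [subst_zero_one, maxCyc_renormWord hn, wplus_renormMax, wminus_renormWord, renormWord_succ]

lemma foldl_subst_renormWord [NeZero m] (hn : m % 2 ≤ n) (k : ℕ) :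
    (List.replicate k [0, 1]).foldl subst (renormWord m n) = renormWord m (n + k) := by
  induction k with
  | zero => rfl
  | succ k ih =>
    rw [List.replicate_succ', List.foldl_append, ih, List.foldl_cons, List.foldl_nil,
      subst_renormWord (by omega), add_assoc]

lemma le_of_mem_renormWord [NeZero m] {d : ℕ} (hd : d ∈ renormWord m n) : d ≤ m :=
  le_of_mem_word (fun _ => klSeq_le _) hd

lemma le_of_mem_renormMax [NeZero m] {d : ℕ} (hd : d ∈ renormMax m n) : d ≤ m := by
  rw [renormMax] at hd
  exact le_of_mem_wminus (fun _ => le_of_mem_word klSeq_le) hd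

lemma exists_mem_renormWord_pos (m n : ℕ) : ∃ d ∈ renormWord m n, 0 < d := by
  have hpos := Nat.two_pow_pos n
  refine ⟨_, List.mem_map_of_mem (List.mem_range.2 (Nat.sub_one_lt hpos.ne')), ?_⟩
  rw [shiftn, show 2 ^ n - 1 + 2 ^ n = 2 ^ (n + 1) - 1 by rw [pow_succ]; omega]
  exact klSeq_two_pow_sub_one_pos m (n + 1)

variable {β : ℝ}

lemma betaL_renormWord_le [NeZero m] (hn : m % 2 ≤ n) (hβ : 1 < β)
    (hone : valSeq β (klSeq m) = 1) : betaL (renormWord m n) ≤ β := by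
  have hrot := renormWord_isRotated_renormMax hn
  have hle : ∀ d ∈ renormMax m n, d ≤ m := fun d => le_of_mem_renormMax
  refine betaL_le_of_valSeq_le_one (m := m) hβ ?_ ?_ ?_ <;> rw [maxCyc_renormWord hn]
  · exact hle
  · obtain ⟨d, hd, hpos⟩ := exists_mem_renormWord_pos m n
    exact ⟨d, hrot.mem_iff.1 hd, hpos⟩
  · refine valSeq_shiftn_le_one hβ (perSeq_le hle) klSeq_le hone (fun i => Or.inr
      (seqLt_iff_exists_word_lt.2 ⟨2 ^ n, ?_⟩)) 0
    rw [← length_renormMax m n, word_shiftn_perSeq, length_renormMax]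
    exact (renormMax_rotate_le n i).trans_lt (renormMax_lt n)

lemma le_betaR_renormWord [NeZero m] (hn : m % 2 ≤ n) (hβ : 1 < β)
    (hone : valSeq β (klSeq m) = 1) : β ≤ betaR (renormWord m n) := by
  set S := renormWord m n with hS
  set e := wordSeq (word (2 ^ n) (klSeq m)) (perSeq S) with he
  have hlen : S.length = 2 ^ n := length_word _ _
  have hword : word (2 ^ n) e = word (2 ^ n) (klSeq m) := by
    simpa only [length_word] using word_wordSeq (word (2 ^ n) (klSeq m)) (perSeq S)
  have hshift : shiftn (2 ^ n) e = perSeq S := by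
    simpa only [length_word] using shiftn_length_wordSeq (word (2 ^ n) (klSeq m)) (perSeq S)
  have hper : word (2 ^ n) (perSeq S) = S := hlen ▸ word_perSeq S
  have hshift_per : shiftn (2 ^ n) (perSeq S) = perSeq S := hlen ▸ shiftn_length_perSeq S
  have hle : ∀ i, e i ≤ m :=
    wordSeq_le (fun _ => le_of_mem_word klSeq_le) (perSeq_le fun _ => le_of_mem_renormWord)
  have hblock : word (2 ^ n) (shiftn (2 ^ (n + 1)) (klSeq m)) < S := by
    rw [word_shiftn_two_pow_klSeq_of_lt m (Nat.pow_lt_pow_right one_lt_two n.lt_succ_self), hS,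
      renormWord_eq_wplus, lt_wplus_iff word_ne_nil rfl]
  have hlt : word (2 ^ n + (2 ^ n + 2 ^ n)) (klSeq m) < word (2 ^ n + (2 ^ n + 2 ^ n)) e := by
    refine word_add_lt_word_add_iff.2 (Or.inr ⟨hword.symm, word_add_lt_word_add_iff.2 (Or.inr ?_)⟩)
    rw [hshift, hper, hshift_per, hper, shiftn_shiftn, ← mul_two, ← pow_succ]
    exact ⟨rfl, hblock⟩
  have hge : 1 ≤ valSeq β e := hone ▸ valSeq_le_of_word_lt hβ klSeq_le hle
    (fun p _ => (klSeq_lexUnivoque m).valSeq_shiftn_le_one hβ hone p) hlt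
  obtain ⟨i, -, hi⟩ := exists_perSeq_pos (exists_mem_renormWord_pos m n)
  have hzero : 0 < e 0 := by
    rw [word_eq_word_iff.1 hword 0 (Nat.two_pow_pos n), klSeq_zero]
    exact Nat.succ_pos _
  have hpos : 0 < e (i + 2 ^ n) := by
    rwa [show e (i + 2 ^ n) = perSeq S i from congrFun hshift i]
  have hbase : β ≤ unitBase e :=
    le_unitBase_of_one_le_valSeq hle (Nat.add_pos_right i (Nat.two_pow_pos n)) hzero hpos hge
  rwa [he, hS, ← wplus_renormMax, ← maxCyc_renormWord hn] at hbase

lemma mem_Jint_renormWord [NeZero m] (hn : m % 2 ≤ n) (hβ : 1 < β)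
    (hone : valSeq β (klSeq m) = 1) : β ∈ Jint (renormWord m n) :=
  ⟨betaL_renormWord_le hn hβ hone, le_betaR_renormWord hn hβ hone⟩

end Renormalization

section Coding

variable {m : ℕ} {s₁ : List ℕ}

lemma zero_one_mem_FareySet : [0, 1] ∈ FareySet :=
  ⟨⟨1, by simp [fareyLevel, fareyInsert]⟩, by simp, by simp⟩

lemma theta_iterate (k : ℕ) (w : List ℕ) : theta^[k] w = w.map (· + k) := by
  induction k with
  | zero => simp
  | succ k ih =>
    rw [Function.iterate_succ_apply', ih, theta, List.map_map]
    rfl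

lemma coding_mem_FareyExt (hm : 1 ≤ m)
    (hs₁ : s₁ = if m % 2 = 1 then [(m + 1) / 2 - 1, (m + 1) / 2] else [m / 2]) :
    s₁ ∈ FareyExt := by
  split_ifs at hs₁ with hodd
  · refine ⟨[0, 1], Or.inl zero_one_mem_FareySet, (m + 1) / 2 - 1, ?_⟩
    have hhalf : 1 + ((m + 1) / 2 - 1) = (m + 1) / 2 := by omega
    simp [theta_iterate, hs₁, hhalf]
  · refine ⟨[1], Or.inr rfl, m / 2 - 1, ?_⟩
    have hhalf : 1 + (m / 2 - 1) = m / 2 := by omega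
    simp [theta_iterate, hs₁, hhalf]

lemma coding_eq_renormWord (hm : 1 ≤ m)
    (hs₁ : s₁ = if m % 2 = 1 then [(m + 1) / 2 - 1, (m + 1) / 2] else [m / 2]) :
    s₁ = renormWord m (m % 2) := by
  have hzero := klSeq_zero m
  have hone : klSeq m 1 = m - klSeq m 0 + 1 := klSeq_two_pow_add m (n := 0) (i := 0) one_pos
  split_ifs at hs₁ with hodd
  · have htwo : klSeq m 2 = m - klSeq m 0 := klSeq_two_pow_add m (n := 1) (i := 0) two_pos
    have hthree : klSeq m 3 = m - klSeq m 1 + 1 :=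
      klSeq_two_pow_add m (n := 1) (i := 1) one_lt_two
    have hword : renormWord m 1 = [klSeq m 2, klSeq m 3] := rfl
    simp only [hodd, hs₁, hword, List.cons.injEq, and_true]
    omega
  · have hword : renormWord m 0 = [klSeq m 1] := rfl
    simp only [Nat.mod_two_ne_one.1 hodd, hs₁, hword, List.cons.injEq, and_true]
    omega

lemma klConst_mem_Jint_coding (hm : 1 ≤ m)
    (hs₁ : s₁ = if m % 2 = 1 then [(m + 1) / 2 - 1, (m + 1) / 2] else [m / 2]) (k : ℕ) :
    klConst m ∈ Jint ((List.replicate k [0, 1]).foldl subst s₁) := by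
  have : NeZero m := ⟨by omega⟩
  rw [coding_eq_renormWord hm hs₁, foldl_subst_renormWord le_rfl]
  exact mem_Jint_renormWord (by omega) (one_lt_klConst m) (valSeq_klConst_klSeq m)

lemma klConst_mem_Einf (hm : 1 ≤ m)
    (hs₁ : s₁ = if m % 2 = 1 then [(m + 1) / 2 - 1, (m + 1) / 2] else [m / 2]) :
    klConst m ∈ Einf := by
  refine mem_iInter₂.2 fun k _ => mem_iUnion₂.2
    ⟨_, ⟨s₁, coding_mem_FareyExt hm hs₁, List.replicate (k - 1) [0, 1], by simp, ?_, rfl⟩,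
      klConst_mem_Jint_coding hm hs₁ (k - 1)⟩
  intro r hr
  rw [List.eq_of_mem_replicate hr]
  exact zero_one_mem_FareySet

end Coding

/-! ### Survivor sets -/

section Survivor

variable {m : ℕ} {β t : ℝ} {x : ℕ → ℕ}

lemma exists_one_div_two_pow_lt (hβ : 1 < β) {ε : ℝ} (hε : 0 < ε) :
    ∃ n : ℕ, 1 / β ^ 2 ^ n < ε := by
  obtain ⟨n, hn⟩ := exists_pow_lt_of_lt_one hε (inv_lt_one_of_one_lt₀ hβ)
  refine ⟨n, lt_of_le_of_lt ?_ hn⟩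
  rw [inv_pow, ← one_div]
  gcongr
  exacts [hβ.le, Nat.lt_two_pow_self.le]

lemma Tbeta_valSeq (hβ : 1 < β) (hx : ∀ i, x i ≤ m) (h : valSeq β (shiftn 1 x) < 1) :
    Tbeta β (valSeq β x) = valSeq β (shiftn 1 x) := by
  refine Int.fract_eq_iff.2 ⟨valSeq_nonneg hβ _, h, x 0, ?_⟩
  rw [← zero_add 1, valSeq_shiftn_succ hβ hx 0, show shiftn 0 x = x from rfl, sub_sub_cancel,
    Int.cast_natCast]

lemma iterate_Tbeta_valSeq (hβ : 1 < β) (hx : ∀ i, x i ≤ m)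
    (h : ∀ i, valSeq β (shiftn i x) < 1) (i : ℕ) :
    (Tbeta β)^[i] (valSeq β x) = valSeq β (shiftn i x) := by
  induction i with
  | zero => rfl
  | succ i ih =>
    have hsucc : shiftn 1 (shiftn i x) = shiftn (i + 1) x := by rw [shiftn_shiftn, add_comm]
    rw [Function.iterate_succ_apply', ih, ← hsucc,
      Tbeta_valSeq (x := shiftn i x) hβ (fun _ => hx _) (hsucc ▸ h (i + 1))]

lemma exists_valSeq_shiftn_eq_iterate_Tbeta (hβ : 1 < β) (hβm : β ≤ m + 1) {z : ℝ}
    (hz : z ∈ Ico (0 : ℝ) 1) : ∃ x : ℕ → ℕ, (∀ i, x i ≤ m) ∧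
      ∀ i, valSeq β (shiftn i x) = (Tbeta β)^[i] z := by
  set orbit : ℕ → ℝ := fun i => (Tbeta β)^[i] z
  have hsucc : ∀ i, orbit (i + 1) = Int.fract (β * orbit i) := fun i =>
    Function.iterate_succ_apply' _ _ _
  have hmem : ∀ i, orbit i ∈ Ico (0 : ℝ) 1 := by
    rintro (_ | i)
    · exact hz
    · rw [hsucc]
      exact ⟨Int.fract_nonneg _, Int.fract_lt_one _⟩
  have hnonneg : ∀ i, 0 ≤ β * orbit i := fun i => mul_nonneg (by positivity) (hmem i).1
  have hdigit : ∀ i, ⌊β * orbit i⌋₊ ≤ m := by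
    intro i
    rw [← Nat.lt_add_one_iff, Nat.floor_lt (hnonneg i)]
    push_cast
    nlinarith [(hmem i).2]
  refine ⟨fun i => ⌊β * orbit i⌋₊, hdigit, valSeq_shiftn_eq_of_orbit hβ hdigit (z := orbit)
    (C := 1) (fun i => ?_) fun i => ?_⟩
  · rw [abs_of_nonneg (hmem i).1]
    exact (hmem i).2.le
  · rw [hsucc, Int.fract, natCast_floor_eq_intCast_floor (hnonneg i)]

lemma survivor_eq_image_valSeq (hβ : 1 < β) (hβm : β ≤ m + 1) :
    survivor β t =
      valSeq β '' {x | (∀ i, x i ≤ m) ∧ ∀ i, valSeq β (shiftn i x) ∈ Ico t 1} := by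
  ext z
  constructor
  · rintro ⟨hz, ht⟩
    obtain ⟨x, hx, horbit⟩ := exists_valSeq_shiftn_eq_iterate_Tbeta hβ hβm hz
    refine ⟨x, ⟨hx, fun i => ⟨(ht i).trans_eq (horbit i).symm, ?_⟩⟩, horbit 0⟩
    rw [horbit]
    cases i with
    | zero => exact hz.2
    | succ i =>
      rw [Function.iterate_succ_apply']
      exact Int.fract_lt_one _
  · rintro ⟨x, ⟨hx, h⟩, rfl⟩
    refine ⟨⟨valSeq_nonneg hβ x, (h 0).2⟩, fun i => ?_⟩
    rw [iterate_Tbeta_valSeq hβ hx fun i => (h i).2]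
    exact (h i).1

lemma eventuallyPeriodic_of_critical_lt [NeZero m] (hβ : 1 < β)
    (hone : valSeq β (klSeq m) = 1) (ht : m / (β - 1) - 1 < t) (hx : ∀ i, x i ≤ m)
    (hxt : ∀ i, valSeq β (shiftn i x) ∈ Ico t 1) : EventuallyPeriodic x := by
  have hkl := klSeq_lexUnivoque m
  obtain ⟨n, hn⟩ := exists_one_div_two_pow_lt hβ (sub_pos.2 ht)
  have hup : ∀ i, seqLe (shiftn i x) (klSeq m) := fun i =>
    Or.inr <| seqLt_of_valSeq_lt hβ (fun _ => hx _) hkl.le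
      (fun p _ => hkl.valSeq_shiftn_le_one hβ hone p) (hone ▸ (hxt i).2)
  have hlo : ∀ i, word (2 ^ n) (reflect m (klSeq m)) < word (2 ^ n) (shiftn i x) := by
    intro i
    by_contra! hle
    have hval := valSeq_le_add_of_word_le hβ (x := shiftn i x) (fun _ => hx _) (reflect_le m _)
      (fun p => shiftn_shiftn p i x ▸ (hxt (p + i)).2.le) hle
    rw [valSeq_reflect hβ hkl.le, hone] at hval
    linarith [(hxt i).1]
  exact (confined_of_seqLe hx hup hlo).eventuallyPeriodic

theorem dimH_survivor_eq_zero [NeZero m] (hβ : 1 < β) (hβm : β ≤ m + 1)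
    (hone : valSeq β (klSeq m) = 1) (ht : m / (β - 1) - 1 < t) : dimH (survivor β t) = 0 := by
  rw [survivor_eq_image_valSeq hβ hβm]
  refine ((countable_setOf_eventuallyPeriodic.mono ?_).image _).dimH_zero
  rintro x ⟨hx, hxt⟩
  exact eventuallyPeriodic_of_critical_lt hβ hone ht hx hxt

end Survivor

/-! ### Positive dimension from separated codings -/

section Dimension

variable {X : Type*} [MetricSpace X] {b : ℕ} {δ B : ℝ} {h : (ℕ → Fin b) → X}

lemma exists_div_pow_le_dist
    (hsep : ∀ c c' q, (∀ i < q, c i = c' i) → c q ≠ c' q → δ / B ^ q ≤ dist (h c) (h c'))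
    {c c' : ℕ → Fin b} (hne : c ≠ c') :
    ∃ q, (∀ i < q, c i = c' i) ∧ δ / B ^ q ≤ dist (h c) (h c') := by
  obtain ⟨q, hq, hmin⟩ := exists_minimal_of_wellFoundedLT _ (Function.ne_iff.1 hne)
  have hag : ∀ i < q, c i = c' i := fun i hi => not_not.1 fun hne => hi.not_ge (hmin hne hi.le)
  exact ⟨q, hag, hsep c c' q hag hq⟩

lemma injective_of_div_pow_le_dist (hδ : 0 < δ) (hB : 1 < B)
    (hsep : ∀ c c' q, (∀ i < q, c i = c' i) → c q ≠ c' q → δ / B ^ q ≤ dist (h c) (h c')) :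
    Function.Injective h := by
  intro c c' heq
  by_contra hne
  obtain ⟨q, -, hq⟩ := exists_div_pow_le_dist hsep hne
  rw [heq, dist_self] at hq
  exact hq.not_gt (by positivity)

lemma dist_ofDigits_le (hδ : 0 < δ) (hB : 1 < B)
    (hsep : ∀ c c' q, (∀ i < q, c i = c' i) → c q ≠ c' q → δ / B ^ q ≤ dist (h c) (h c'))
    {r : NNReal} (hr : B ^ (r : ℝ) = b) (c c' : ℕ → Fin b) :
    dist (Real.ofDigits c) (Real.ofDigits c') ≤
      (δ ^ (r : ℝ))⁻¹ * dist (h c) (h c') ^ (r : ℝ) := by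
  rcases eq_or_ne c c' with rfl | hne
  · rw [dist_self]
    positivity
  obtain ⟨q, hag, hq⟩ := exists_div_pow_le_dist hsep hne
  have hpow : (B ^ q) ^ (r : ℝ) = (b : ℝ) ^ q := by
    rw [← Real.rpow_natCast_mul (by positivity), mul_comm, Real.rpow_mul_natCast (by positivity),
      hr]
  calc dist (Real.ofDigits c) (Real.ofDigits c') ≤ ((b : ℝ) ^ q)⁻¹ :=
        Real.abs_ofDigits_sub_ofDigits_le hag
    _ = (δ ^ (r : ℝ))⁻¹ * (δ / B ^ q) ^ (r : ℝ) := by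
        rw [Real.div_rpow hδ.le (by positivity), hpow]
        field_simp
    _ ≤ (δ ^ (r : ℝ))⁻¹ * dist (h c) (h c') ^ (r : ℝ) := by gcongr

lemma holderOnWith_of_dist_le {Y : Type*} [PseudoMetricSpace Y] {C r : NNReal} {f : X → Y}
    {s : Set X} (hf : ∀ x ∈ s, ∀ y ∈ s, dist (f x) (f y) ≤ C * dist x y ^ (r : ℝ)) :
    HolderOnWith C r f s := by
  intro x hx y hy
  rw [edist_dist, edist_dist, ENNReal.ofReal_rpow_of_nonneg dist_nonneg r.coe_nonneg,
    ← ENNReal.ofReal_coe_nnreal, ← ENNReal.ofReal_mul C.coe_nonneg]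
  exact ENNReal.ofReal_le_ofReal (hf x hx y hy)

/-- The inverse of the coding `h`, followed by base-`b` expansion, is Hölder continuous with
exponent `log_B b` and maps onto `[0, 1]`. -/
theorem logb_le_dimH_range_of_div_pow_le_dist (hb : 1 < b) (hδ : 0 < δ) (hB : 1 < B)
    (hsep : ∀ c c' q, (∀ i < q, c i = c' i) → c q ≠ c' q → δ / B ^ q ≤ dist (h c) (h c')) :
    ENNReal.ofReal (Real.logb B b) ≤ dimH (range h) := by
  have hinj := injective_of_div_pow_le_dist hδ hB hsep
  have hb1 : (1 : ℝ) < b := by exact_mod_cast hb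
  have hlog : 0 < Real.logb B b := Real.logb_pos hB hb1
  set r : NNReal := (Real.logb B b).toNNReal
  have hr : (r : ℝ) = Real.logb B b := Real.coe_toNNReal _ hlog.le
  have hBr : B ^ (r : ℝ) = b := by rw [hr, Real.rpow_logb (by positivity) hB.ne' (by positivity)]
  have : NeZero b := ⟨by omega⟩
  set f : X → ℝ := fun x => Real.ofDigits (Function.invFun h x)
  have hf : ∀ c, f (h c) = Real.ofDigits c := fun c =>
    congrArg Real.ofDigits (Function.leftInverse_invFun hinj c)
  have hhol : HolderOnWith ⟨(δ ^ (r : ℝ))⁻¹, by positivity⟩ r f (range h) := by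
    refine holderOnWith_of_dist_le ?_
    rintro _ ⟨c, rfl⟩ _ ⟨c', rfl⟩
    rw [hf, hf]
    exact dist_ofDigits_le hδ hB hsep hBr c c'
  have himage : Icc (0 : ℝ) 1 ⊆ f '' range h := by
    intro y hy
    obtain ⟨c, -, hc⟩ := Real.ofDigits_SurjOn hb hy
    exact ⟨h c, ⟨c, rfl⟩, by rw [hf, hc]⟩
  have hIcc : dimH (Icc (0 : ℝ) 1) = 1 := by
    rw [Real.dimH_of_nonempty_interior (by rw [interior_Icc]; exact nonempty_Ioo.2 one_pos)]
    simp
  have hone : 1 ≤ dimH (range h) / r :=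
    calc 1 = dimH (Icc (0 : ℝ) 1) := hIcc.symm
      _ ≤ dimH (f '' range h) := dimH_mono himage
      _ ≤ dimH (range h) / r := hhol.dimH_image_le (Real.toNNReal_pos.2 hlog)
  simpa [r, ENNReal.ofReal] using (ENNReal.le_div_iff_mul_le (by simp [r, hlog]) (by simp)).1 hone

end Dimension

/-! ### Concatenations of blocks -/

section Blocks

variable {m n N : ℕ} {β : ℝ} {w w' : ℕ → List ℕ} {b x : ℕ → ℕ}

/-- The concatenation `w₀w₁w₂⋯` of words of length `N`. -/
def concatSeq (N : ℕ) (w : ℕ → List ℕ) : ℕ → ℕ := fun i => (w (i / N)).getD (i % N) 0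

lemma word_shiftn_concatSeq (hw : ∀ q, (w q).length = N) (q : ℕ) :
    word N (shiftn (N * q) (concatSeq N w)) = w q := by
  refine List.ext_getElem (by simp [hw]) fun i hi hi' => ?_
  have hiN : i < N := hw q ▸ hi'
  rw [getElem_word, shiftn, concatSeq, add_comm, Nat.mul_add_div (by omega),
    Nat.div_eq_of_lt hiN, add_zero, Nat.mul_add_mod, Nat.mod_eq_of_lt hiN,
    List.getD_eq_getElem _ _ hi']

lemma word_mul_concatSeq_congr {q : ℕ} (h : ∀ i < q, w i = w' i) :
    word (N * q) (concatSeq N w) = word (N * q) (concatSeq N w') :=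
  word_eq_word_iff.2 fun i hi => by rw [concatSeq, concatSeq, h _ (Nat.div_lt_of_lt_mul hi)]

lemma word_concatSeq_lt (hw : ∀ q, (w q).length = N) (hw' : ∀ q, (w' q).length = N) {q : ℕ}
    (h : ∀ i < q, w i = w' i) (hq : w q < w' q) :
    word (N * q + N) (concatSeq N w) < word (N * q + N) (concatSeq N w') := by
  rw [word_add_lt_word_add_iff, word_shiftn_concatSeq hw, word_shiftn_concatSeq hw']
  exact Or.inr ⟨word_mul_concatSeq_congr h, hq⟩

lemma concatSeq_le (hw : ∀ q, ∀ d ∈ w q, d ≤ m) (i : ℕ) : concatSeq N w i ≤ m := by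
  rw [concatSeq, List.getD_eq_getElem?_getD]
  cases h : (w (i / N))[i % N]? with
  | none => exact Nat.zero_le _
  | some d => exact hw _ d (List.mem_of_getElem? h)

/-- Every tail of `b` begins with a nonempty suffix `(λ_r ⋯ λ_{2^k-1})⁻` of some
`renormMax m k`, followed by `λ_0 ⋯ λ_{2^n-2}`. This keeps `b` below `klSeq m` and, on windows of
length `2 ^ n`, above its reflection. -/
structure IsBlockConcat (m n : ℕ) (b : ℕ → ℕ) : Prop where
  le : ∀ i, b i ≤ m
  exists_suffix : ∀ i, ∃ k r, r < 2 ^ k ∧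
    word (2 ^ k - r) (shiftn i b) = wminus (word (2 ^ k - r) (shiftn r (klSeq m))) ∧
    word (2 ^ n - 1) (shiftn (2 ^ k - r) (shiftn i b)) = word (2 ^ n - 1) (klSeq m)

lemma IsBlockConcat.seqLt [NeZero m] (h : IsBlockConcat m n b) (i : ℕ) :
    seqLt (shiftn i b) (klSeq m) := by
  obtain ⟨k, r, hr, hsuffix, -⟩ := h.exists_suffix i
  exact seqLt_iff_exists_word_lt.2 ⟨2 ^ k - r, hsuffix ▸ wminus_word_shiftn_klSeq_lt hr⟩

lemma word_reflect_klSeq_le_wminus [NeZero m] {r : ℕ} (hr : r < 2 ^ n) :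
    word (2 ^ n - r) (reflect m (klSeq m)) ≤
      wminus (word (2 ^ n - r) (shiftn r (klSeq m))) := by
  have hne : word (2 ^ n - r) (shiftn r (klSeq m)) ≠ [] :=
    List.length_pos_iff.1 (by rw [length_word]; omega)
  have hlen := length_wminus hne
  rw [← lt_wplus_iff (List.length_pos_iff.1 (by rw [hlen, length_word]; omega)) (by simp [hlen]),
    wplus_wminus_word_shiftn_klSeq hr]
  rcases Nat.eq_zero_or_pos r with rfl | hpos
  · exact word_reflect_klSeq_lt_word_klSeq m (by omega)
  · exact (word_klSeq_bounds n r hpos hr).1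

lemma IsBlockConcat.word_reflect_le [NeZero m] (h : IsBlockConcat m n b) (i : ℕ) :
    word (2 ^ n) (reflect m (klSeq m)) ≤ word (2 ^ n) (shiftn i b) := by
  obtain ⟨k, r, hr, hsuffix, hnext⟩ := h.exists_suffix i
  refine word_le_word_anti (k := 2 ^ k - r + (2 ^ n - 1)) (by omega) ?_
  rw [word_add_le_word_add_iff, hsuffix, hnext]
  refine (word_reflect_klSeq_le_wminus hr).lt_or_eq.imp_right fun heq => ⟨heq, ?_⟩
  exact seqLe_iff_forall_word_le.1 (Or.inr ((klSeq_lexUnivoque m).reflect_lt _)) _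

lemma IsBlockConcat.valSeq_shiftn_mem_Ico [NeZero m] (h : IsBlockConcat m n b) (hβ : 1 < β)
    (hone : valSeq β (klSeq m) = 1) (i : ℕ) :
    valSeq β (shiftn i b) ∈ Ico (m / (β - 1) - 1 - 1 / β ^ 2 ^ n) 1 := by
  have hkl := klSeq_lexUnivoque m
  have hle := valSeq_shiftn_le_one hβ h.le hkl.le hone fun i => Or.inr (h.seqLt i)
  constructor
  · have hval := valSeq_le_add_of_word_le hβ (reflect_le m _) (fun _ => h.le _)
      (hkl.valSeq_reflect_shiftn_le_one hβ hone) (h.word_reflect_le i)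
    rw [valSeq_reflect hβ hkl.le, hone] at hval
    exact sub_le_iff_le_add.2 hval
  · exact hkl.valSeq_lt_one hβ hone (fun _ => h.le _)
      (fun p => shiftn_shiftn p i b ▸ hle (p + i)) (h.seqLt i)

/-- The words `(λ_0 ⋯ λ_{N-1})⁻(λ_0 ⋯ λ_{N-1})⁻` and `(λ_0 ⋯ λ_{2N-1})⁻` with `N = 2 ^ n`, out of
which a set of surviving sequences of positive entropy is built. -/
def blockWord (m n : ℕ) : Fin 2 → List ℕ :=
  ![renormMax m n ++ renormMax m n, renormMax m (n + 1)]

lemma length_blockWord (m n : ℕ) (a : Fin 2) : (blockWord m n a).length = 2 ^ (n + 1) := by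
  match a with
  | 0 => simp [blockWord, length_renormMax, pow_succ, mul_two]
  | 1 => simp [blockWord, length_renormMax]

lemma le_of_mem_blockWord [NeZero m] {a : Fin 2} {d : ℕ} (hd : d ∈ blockWord m n a) : d ≤ m := by
  match a with
  | 0 => exact (List.mem_append.1 hd).elim le_of_mem_renormMax le_of_mem_renormMax
  | 1 => exact le_of_mem_renormMax hd

lemma blockWord_strictMono [NeZero m] : StrictMono (blockWord m n) := by
  refine Fin.strictMono_iff_lt_succ.2 fun a => ?_
  rw [Subsingleton.elim a 0]
  change renormMax m n ++ renormMax m n < renormMax m (n + 1)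
  rw [renormMax_succ, append_lt_append_iff (by rw [length_renormMax, length_word])]
  exact Or.inl (renormMax_lt n)

lemma word_sub_one_of_word_eq_renormMax (h : word (2 ^ n) x = renormMax m n) :
    word (2 ^ n - 1) x = word (2 ^ n - 1) (klSeq m) := by
  have hN : 2 ^ n - 1 + 1 = 2 ^ n := Nat.sub_add_cancel Nat.one_le_two_pow
  rw [renormMax_eq_append hN one_pos, ← hN] at h
  exact (word_add_eq_append h (length_word _ _)).1

lemma word_sub_one_of_word_eq_blockWord {a : Fin 2}
    (h : word (2 ^ n + 2 ^ n) x = blockWord m n a) :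
    word (2 ^ n - 1) x = word (2 ^ n - 1) (klSeq m) := by
  match a with
  | 0 => exact word_sub_one_of_word_eq_renormMax (word_add_eq_append h (length_renormMax m n)).1
  | 1 =>
    have hN := (word_add_eq_append (h.trans (renormMax_succ m n)) (length_word _ _)).1
    exact word_eq_word_iff.2 fun i hi => word_eq_word_iff.1 hN i (by omega)

lemma exists_suffix_of_word_eq_renormMax {k r : ℕ} (hr : r < 2 ^ k)
    (h : word (2 ^ k) x = renormMax m k)
    (hnext : word (2 ^ n - 1) (shiftn (2 ^ k) x) = word (2 ^ n - 1) (klSeq m)) :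
    ∃ k r', r' < 2 ^ k ∧
      word (2 ^ k - r') (shiftn r x) = wminus (word (2 ^ k - r') (shiftn r' (klSeq m))) ∧
      word (2 ^ n - 1) (shiftn (2 ^ k - r') (shiftn r x)) = word (2 ^ n - 1) (klSeq m) := by
  have hk : r + (2 ^ k - r) = 2 ^ k := by omega
  have happend : word (r + (2 ^ k - r)) x =
      word r (klSeq m) ++ wminus (word (2 ^ k - r) (shiftn r (klSeq m))) := by
    rw [hk, h, renormMax_eq_append hk (by omega)]
  refine ⟨k, r, hr, (word_add_eq_append happend (length_word _ _)).2, ?_⟩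
  rwa [shiftn_shiftn, Nat.sub_add_cancel hr.le]

/-- The concatenation of the words `blockWord m n (c q)`. -/
def blockSeq (m n : ℕ) (c : ℕ → Fin 2) : ℕ → ℕ :=
  concatSeq (2 ^ (n + 1)) fun q => blockWord m n (c q)

lemma word_shiftn_blockSeq (c : ℕ → Fin 2) (q : ℕ) :
    word (2 ^ n + 2 ^ n) (shiftn (2 ^ (n + 1) * q) (blockSeq m n c)) = blockWord m n (c q) := by
  rw [← mul_two, ← pow_succ]
  exact word_shiftn_concatSeq (fun q => length_blockWord m n (c q)) q

lemma blockSeq_isBlockConcat [NeZero m] (n : ℕ) (c : ℕ → Fin 2) :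
    IsBlockConcat m n (blockSeq m n c) where
  le := concatSeq_le fun q d => le_of_mem_blockWord
  exists_suffix i := by
    have hpow : 2 ^ (n + 1) = 2 ^ n + 2 ^ n := by rw [pow_succ, mul_two]
    obtain ⟨q, r, hr, rfl⟩ : ∃ q r, r < 2 ^ (n + 1) ∧ i = r + 2 ^ (n + 1) * q :=
      ⟨_, _, Nat.mod_lt i (by positivity), (Nat.mod_add_div i _).symm⟩
    set y := shiftn (2 ^ (n + 1) * q) (blockSeq m n c) with hy
    have hblock : word (2 ^ n + 2 ^ n) y = blockWord m n (c q) := word_shiftn_blockSeq c q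
    have hnext : word (2 ^ n - 1) (shiftn (2 ^ (n + 1)) y) = word (2 ^ n - 1) (klSeq m) := by
      rw [hy, shiftn_shiftn, add_comm, ← mul_add_one]
      exact word_sub_one_of_word_eq_blockWord (word_shiftn_blockSeq c (q + 1))
    rw [← shiftn_shiftn, ← hy]
    generalize c q = a at hblock
    match a with
    | 1 => exact exists_suffix_of_word_eq_renormMax hr (hpow ▸ hblock) hnext
    | 0 =>
      obtain ⟨hfst, hsnd⟩ := word_add_eq_append hblock (length_renormMax m n)
      rcases lt_or_ge r (2 ^ n) with hlt | hge
      · exact exists_suffix_of_word_eq_renormMax hlt hfst (word_sub_one_of_word_eq_renormMax hsnd)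
      · obtain ⟨s, rfl⟩ := Nat.exists_eq_add_of_le' hge
        rw [← shiftn_shiftn]
        refine exists_suffix_of_word_eq_renormMax (by omega) hsnd ?_
        rwa [shiftn_shiftn, ← hpow]

end Blocks

/-! ### The critical value -/

section CriticalValue

variable {m n : ℕ} {β t : ℝ}

lemma valSeq_blockSeq_add_le [NeZero m] (hβ : 1 < β) (hone : valSeq β (klSeq m) = 1) (ht : 0 ≤ t)
    (htn : t ≤ m / (β - 1) - 1 - 1 / β ^ 2 ^ n) {c c' : ℕ → Fin 2} {q : ℕ}
    (h : ∀ i < q, c i = c' i) (hq : c q < c' q) :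
    valSeq β (blockSeq m n c) + t / β ^ 2 ^ (n + 1) / (β ^ 2 ^ (n + 1)) ^ q ≤
      valSeq β (blockSeq m n c') := by
  have hb := blockSeq_isBlockConcat (m := m) n c
  have hb' := blockSeq_isBlockConcat (m := m) n c'
  rw [div_div, ← pow_mul, ← pow_add, add_comm (2 ^ (n + 1))]
  refine valSeq_add_le_of_word_lt hβ hb.le hb'.le
    (fun p _ => (hb.valSeq_shiftn_mem_Ico hβ hone p).2.le) ht
    (fun p => htn.trans (hb'.valSeq_shiftn_mem_Ico hβ hone p).1) ?_
  exact word_concatSeq_lt (fun q => length_blockWord m n (c q))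
    (fun q => length_blockWord m n (c' q)) (fun i hi => by rw [h i hi]) (blockWord_strictMono hq)

lemma div_pow_le_dist_valSeq_blockSeq [NeZero m] (hβ : 1 < β) (hone : valSeq β (klSeq m) = 1)
    (ht : 0 ≤ t) (htn : t ≤ m / (β - 1) - 1 - 1 / β ^ 2 ^ n) (c c' : ℕ → Fin 2) (q : ℕ)
    (h : ∀ i < q, c i = c' i) (hq : c q ≠ c' q) :
    t / β ^ 2 ^ (n + 1) / (β ^ 2 ^ (n + 1)) ^ q ≤
      dist (valSeq β (blockSeq m n c)) (valSeq β (blockSeq m n c')) := by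
  rcases hq.lt_or_gt with hlt | hlt
  · rw [dist_comm]
    exact (le_sub_iff_add_le'.2 (valSeq_blockSeq_add_le hβ hone ht htn h hlt)).trans (le_abs_self _)
  · exact (le_sub_iff_add_le'.2 (valSeq_blockSeq_add_le hβ hone ht htn
      (fun i hi => (h i hi).symm) hlt)).trans (le_abs_self _)

theorem dimH_survivor_pos [NeZero m] (hβ : 1 < β) (hβm : β ≤ m + 1)
    (hone : valSeq β (klSeq m) = 1) (ht0 : 0 < t) (ht : t < m / (β - 1) - 1) :
    0 < dimH (survivor β t) := by
  obtain ⟨n, hn⟩ := exists_one_div_two_pow_lt hβ (sub_pos.2 ht)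
  have htn : t ≤ m / (β - 1) - 1 - 1 / β ^ 2 ^ n := by linarith
  have hB : 1 < β ^ 2 ^ (n + 1) := one_lt_pow₀ hβ (by positivity)
  have hsub : range (fun c => valSeq β (blockSeq m n c)) ⊆ survivor β t := by
    rw [survivor_eq_image_valSeq hβ hβm]
    rintro _ ⟨c, rfl⟩
    have hb := blockSeq_isBlockConcat (m := m) n c
    exact ⟨_, ⟨hb.le, fun i => Ico_subset_Ico_left htn (hb.valSeq_shiftn_mem_Ico hβ hone i)⟩, rfl⟩
  calc 0 < ENNReal.ofReal (Real.logb (β ^ 2 ^ (n + 1)) (2 : ℕ)) :=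
        ENNReal.ofReal_pos.2 (Real.logb_pos hB (by norm_num))
    _ ≤ dimH (range fun c => valSeq β (blockSeq m n c)) :=
        logb_le_dimH_range_of_div_pow_le_dist one_lt_two (by positivity) hB
          (div_pow_le_dist_valSeq_blockSeq hβ hone ht0.le htn)
    _ ≤ dimH (survivor β t) := dimH_mono hsub

theorem tau_eq [NeZero m] (hβ : 1 < β) (hβm : β ≤ m + 1) (hone : valSeq β (klSeq m) = 1) :
    tau β = m / (β - 1) - 1 := by
  have hpos := (klSeq_lexUnivoque m).critical_pos hβ hone
  have hzero : ∀ t, m / (β - 1) - 1 < t → dimH (survivor β t) = 0 := fun t =>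
    dimH_survivor_eq_zero hβ hβm hone
  refine csInf_eq_of_forall_ge_of_forall_gt_exists_lt
    ⟨m / (β - 1), by linarith, hzero _ (by linarith)⟩ ?_ ?_
  · rintro t ⟨ht0, ht⟩
    by_contra! hlt
    exact (dimH_survivor_pos hβ hβm hone ht0 hlt).ne' ht
  · intro t ht
    obtain ⟨u, hu, hut⟩ := exists_between ht
    exact ⟨u, ⟨hpos.trans hu, hzero u hu⟩, hut⟩

end CriticalValue

end KomornikLoreti

/-- For each `m ≥ 1`, the Komornik–Loreti constant `β_m` belongs to
`E_∞` with coding `(s₁, 01, 01, …)`, where `s₁ = (k-1)k` if `m = 2k-1` and `s₁ = k` if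
`m = 2k`, and `τ(β_m) = m/(β_m - 1) - 1 = (m + 1 - β_m)/(β_m - 1)`. -/
theorem komornik_loreti_in_Einf (m : ℕ) (hm : 1 ≤ m) (s₁ : List ℕ)
    (hs₁ : s₁ = if m % 2 = 1 then [(m + 1) / 2 - 1, (m + 1) / 2] else [m / 2]) :
    klConst m ∈ Einf ∧
    (∀ k : ℕ, klConst m ∈ Jint ((List.replicate k [0, 1]).foldl subst s₁)) ∧
    tau (klConst m) = (m : ℝ) / (klConst m - 1) - 1 ∧
    (m : ℝ) / (klConst m - 1) - 1 = ((m : ℝ) + 1 - klConst m) / (klConst m - 1) := by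
  have : NeZero m := ⟨by omega⟩
  have hβ := KomornikLoreti.one_lt_klConst m
  have hβ' : klConst m - 1 ≠ 0 := (sub_pos.2 hβ).ne'
  refine ⟨KomornikLoreti.klConst_mem_Einf hm hs₁, KomornikLoreti.klConst_mem_Jint_coding hm hs₁,
    KomornikLoreti.tau_eq hβ (KomornikLoreti.klConst_le m)
      (KomornikLoreti.valSeq_klConst_klSeq m), ?_⟩
  field_simp
  ring
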